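/- arXiv:0903.3569 — 10 statements merged into one kernel-verified Lean document; each statement's English description precedes it below -/
import Mathlib

section
/- Let Δ be a matroid complex on a finite vertex set V, let v be a center of Δ, and let W be a finite nonempty set of vertices disjoint from V. Then the partial star S_v^W Δ is a matroid complex. -/
/-!
The new vertices of the partial star are parallel copies of `v`. With `p` the map sending
every `w ∈ W` to `v` and fixing all other points, a set `F` is a face of the partial star exactly
when `p` is injective on `F` and the image `p(F)` is a face of `Δ` (`mem_partialStar_iff`). So the
partial star is the pullback of `Δ` along `p`.

Purity of all restrictions is equivalent to the augmentation property: for faces `F`, `G` with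
`|F| < |G|`, some `x ∈ G \ F` makes `F ∪ {x}` a face (`exists_augment`, `isPureCplx_of_augment`).
Augmentation passes to a pullback: augment `p(F)` by an element `p(x)` of `p(G) \ p(F)`, then
augment `F` by `x`; since `p(x) ∉ p(F)`, injectivity is preserved.
-/

variable {α : Type*} [DecidableEq α]

/-- A simplicial complex: a collection of finite sets closed under taking subsets. -/
def IsCplx (Δ : Set (Finset α)) : Prop :=
  ∀ F ∈ Δ, ∀ G ⊆ F, G ∈ Δ

/-- Restriction of a complex to a vertex subset `W`. -/
def cplxRes (Δ : Set (Finset α)) (W : Finset α) : Set (Finset α) :=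
  {F | F ∈ Δ ∧ F ⊆ W}

/-- A complex is pure if all faces maximal under inclusion have the same cardinality
(equivalently, the same dimension). -/
def IsPureCplx (Δ : Set (Finset α)) : Prop :=
  ∀ F ∈ Δ, ∀ G ∈ Δ, (∀ H ∈ Δ, F ⊆ H → H = F) → (∀ H ∈ Δ, G ⊆ H → H = G) →
    F.card = G.card

/-- A matroid complex on vertex set `V`: a simplicial complex all of whose
restrictions are pure. -/
def IsMatroidCplx (Δ : Set (Finset α)) (V : Finset α) : Prop :=
  IsCplx Δ ∧ (∀ F ∈ Δ, F ⊆ V) ∧ ∀ W ⊆ V, IsPureCplx (cplxRes Δ W)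

/-- The link of a face `F`: `{G ∈ Δ : F ∩ G = ∅ and F ∪ G ∈ Δ}`. -/
def linkCplx (Δ : Set (Finset α)) (F : Finset α) : Set (Finset α) :=
  {G | G ∈ Δ ∧ F ∩ G = ∅ ∧ F ∪ G ∈ Δ}

/-- `v` is a center of `Δ`: `v` is a vertex and `{v, w} ∈ Δ` for every other
vertex `w` of `Δ`. -/
def IsCenter (Δ : Set (Finset α)) (v : α) : Prop :=
  ({v} : Finset α) ∈ Δ ∧ ∀ w, ({w} : Finset α) ∈ Δ → w ≠ v → ({v, w} : Finset α) ∈ Δ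

/-- The partial star avoiding `v` with new vertices `W`: the faces of `Δ`
together with all sets `E ∪ {w}` with `E ∈ link_Δ(v)` and `w ∈ W`. -/
def partialStar (Δ : Set (Finset α)) (v : α) (W : Finset α) : Set (Finset α) :=
  Δ ∪ {G | ∃ E ∈ linkCplx Δ {v}, ∃ w ∈ W, G = insert w E}

/-- Faces of a matroid complex satisfy the augmentation property: inside `F ∪ G` the smaller face
`F` cannot be maximal, because some maximal face contains `G`. -/
theorem exists_augment {Δ : Set (Finset α)} {V : Finset α} (hΔ : IsMatroidCplx Δ V)
    {F G : Finset α} (hF : F ∈ Δ) (hG : G ∈ Δ) (hlt : F.card < G.card) :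
    ∃ x ∈ G, x ∉ F ∧ insert x F ∈ Δ := by
  obtain ⟨hcplx, hV, hpure⟩ := hΔ
  have hfin : (cplxRes Δ (F ∪ G)).Finite :=
    (F ∪ G).powerset.finite_toSet.subset fun H hH => Finset.mem_coe.2 (Finset.mem_powerset.2 hH.2)
  obtain ⟨G', hGG', hmax⟩ := hfin.exists_le_maximal
    (show G ∈ cplxRes Δ (F ∪ G) from ⟨hG, Finset.subset_union_right⟩)
  by_contra! hno
  have hFmax : ∀ H ∈ cplxRes Δ (F ∪ G), F ⊆ H → H = F := by
    intro H hH hFH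
    refine Finset.Subset.antisymm (fun x hx => ?_) hFH
    by_contra hxF
    have hxG : x ∈ G := (Finset.mem_union.1 (hH.2 hx)).resolve_left hxF
    exact hno x hxG hxF (hcplx H hH.1 _ (Finset.insert_subset hx hFH))
  have hcard := hpure (F ∪ G) (Finset.union_subset (hV F hF) (hV G hG))
    F ⟨hF, Finset.subset_union_left⟩ G' hmax.prop hFmax
    (fun H hH hle => Finset.Subset.antisymm (hmax.2 hH hle) hle)
  have := Finset.card_le_card hGG'
  omega

theorem isPureCplx_of_augment {Δ : Set (Finset α)}
    (h : ∀ F ∈ Δ, ∀ G ∈ Δ, F.card < G.card → ∃ x ∈ G, x ∉ F ∧ insert x F ∈ Δ)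
    (U : Finset α) : IsPureCplx (cplxRes Δ U) := by
  have key : ∀ F ∈ cplxRes Δ U, ∀ G ∈ cplxRes Δ U,
      (∀ H ∈ cplxRes Δ U, F ⊆ H → H = F) → G.card ≤ F.card := by
    intro F hF G hG hmax
    by_contra! hlt
    obtain ⟨x, hxG, hxF, hx⟩ := h F hF.1 G hG.1 hlt
    have := hmax _ ⟨hx, Finset.insert_subset (hG.2 hxG) hF.2⟩ (Finset.subset_insert x F)
    exact hxF (this ▸ Finset.mem_insert_self x F)
  exact fun F hF G hG hFm hGm => le_antisymm (key G hG F hF hGm) (key F hF G hG hFm)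

/-- The map collapsing every vertex of `W` to `v` and fixing all other points. -/
def collapseTo (v : α) (W : Finset α) (x : α) : α := if x ∈ W then v else x

theorem collapseTo_of_mem {v x : α} {W : Finset α} (h : x ∈ W) : collapseTo v W x = v := if_pos h

theorem collapseTo_of_notMem {v x : α} {W : Finset α} (h : x ∉ W) : collapseTo v W x = x := if_neg h

theorem image_collapseTo_eq_self {v : α} {W F : Finset α} (h : ∀ x ∈ F, x ∉ W) :
    F.image (collapseTo v W) = F := by
  rw [Finset.image_congr (g := id) fun x hx => (collapseTo_of_notMem (h x hx) : collapseTo v W x = id x),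
    Finset.image_id]

theorem injOn_collapseTo {v : α} {W F : Finset α} (h : ∀ x ∈ F, x ∉ W) :
    Set.InjOn (collapseTo v W) F := by
  intro x hx y hy hxy
  rwa [collapseTo_of_notMem (h x hx), collapseTo_of_notMem (h y hy)] at hxy

/-- The partial star is the pullback of `Δ` along the collapsing map. -/
theorem mem_partialStar_iff {Δ : Set (Finset α)} {V W : Finset α} {v : α}
    (hcplx : IsCplx Δ) (hV : ∀ F ∈ Δ, F ⊆ V) (hv : v ∈ V) (hdisj : Disjoint W V) (F : Finset α) :
    F ∈ partialStar Δ v W ↔ Set.InjOn (collapseTo v W) F ∧ F.image (collapseTo v W) ∈ Δ := by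
  have hVW : ∀ x ∈ V, x ∉ W := fun x hx hxW => Finset.disjoint_left.1 hdisj hxW hx
  constructor
  · rintro (hF | ⟨E, ⟨hE, hvE, hvE'⟩, w, hw, rfl⟩)
    · have hFW : ∀ x ∈ F, x ∉ W := fun x hx => hVW x (hV F hF hx)
      exact ⟨injOn_collapseTo hFW, by rwa [image_collapseTo_eq_self hFW]⟩
    · have hEW : ∀ x ∈ E, x ∉ W := fun x hx => hVW x (hV E hE hx)
      have hvnE : v ∉ E := by
        rwa [← Finset.disjoint_iff_inter_eq_empty, Finset.disjoint_singleton_left] at hvE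
      constructor
      · rw [Finset.coe_insert, Set.injOn_insert (fun h => hEW w h hw), ← Finset.coe_image,
          image_collapseTo_eq_self hEW, collapseTo_of_mem hw]
        exact ⟨injOn_collapseTo hEW, hvnE⟩
      · rwa [Finset.image_insert, image_collapseTo_eq_self hEW, collapseTo_of_mem hw,
          Finset.insert_eq]
  · rintro ⟨hinj, himg⟩
    by_cases hFW : ∀ x ∈ F, x ∉ W
    · left
      rwa [image_collapseTo_eq_self hFW] at himg
    · push Not at hFW
      obtain ⟨w, hwF, hwW⟩ := hFW
      have hEW : ∀ x ∈ F.erase w, x ∉ W := by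
        intro x hx hxW
        rw [Finset.mem_erase] at hx
        exact hx.1 (hinj hx.2 hwF ((collapseTo_of_mem hxW).trans (collapseTo_of_mem hwW).symm))
      have hvE : v ∉ F.erase w := by
        intro hvE
        rw [Finset.mem_erase] at hvE
        exact hvE.1 (hinj hvE.2 hwF
          ((collapseTo_of_notMem (hVW v hv)).trans (collapseTo_of_mem hwW).symm))
      rw [← Finset.insert_erase hwF, Finset.image_insert, image_collapseTo_eq_self hEW,
        collapseTo_of_mem hwW] at himg
      right
      refine ⟨F.erase w, ⟨?_, ?_, ?_⟩, w, hwW, (Finset.insert_erase hwF).symm⟩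
      · exact hcplx _ himg _ (Finset.subset_insert _ _)
      · rwa [← Finset.disjoint_iff_inter_eq_empty, Finset.disjoint_singleton_left]
      · rwa [← Finset.insert_eq]

/-- If `Δ` is a matroid complex on `V`, `v` is a center of `Δ`, and `W` is a
finite nonempty set of new vertices disjoint from `V`, then the partial star
`S_v^W Δ` is a matroid complex on `V ∪ W`. -/
theorem partialStar_isMatroidCplx (Δ : Set (Finset α)) (V : Finset α) (v : α) (W : Finset α)
    (hΔ : IsMatroidCplx Δ V) (hv : IsCenter Δ v) (hW : W.Nonempty) (hdisj : Disjoint W V) :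
    IsMatroidCplx (partialStar Δ v W) (V ∪ W) := by
  have hcplx := hΔ.1
  have hV := hΔ.2.1
  have hvV : v ∈ V := hV _ hv.1 (Finset.mem_singleton_self v)
  have hmem := mem_partialStar_iff hcplx hV hvV hdisj
  refine ⟨?_, ?_, fun U _ => isPureCplx_of_augment ?_ U⟩
  · intro F hF G hGF
    rw [hmem] at hF ⊢
    exact ⟨hF.1.mono (Finset.coe_subset.2 hGF),
      hcplx _ hF.2 _ (Finset.image_subset_image hGF)⟩
  · intro F hF x hx
    rw [hmem] at hF
    by_cases hxW : x ∈ W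
    · exact Finset.mem_union_right V hxW
    · have := hV _ hF.2 (Finset.mem_image_of_mem (collapseTo v W) hx)
      rw [collapseTo_of_notMem hxW] at this
      exact Finset.mem_union_left W this
  · intro F hF G hG hlt
    rw [hmem] at hF hG
    rw [← Finset.card_image_of_injOn hF.1, ← Finset.card_image_of_injOn hG.1] at hlt
    obtain ⟨y, hyG, hyF, hy⟩ := exists_augment hΔ hF.2 hG.2 hlt
    obtain ⟨x, hxG, rfl⟩ := Finset.mem_image.1 hyG
    have hxF : x ∉ F := fun h => hyF (Finset.mem_image_of_mem _ h)
    refine ⟨x, hxG, hxF, (hmem _).2 ⟨?_, by rwa [Finset.image_insert]⟩⟩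
    rw [Finset.coe_insert, Set.injOn_insert (by simpa using hxF), ← Finset.coe_image]
    exact ⟨hF.1, by simpa using hyF⟩
end

section
/- A simplicial complex Δ is a matroid complex if and only if Δ is isomorphic to a complex of the form S_{v_k}^{m_k} ⋯ S_{v_1}^{m_1} Γ, where Γ is a matroid complex whose 1-skeleton is a complete graph (possibly the one-point complex K_1), v_1, …, v_k are distinct vertices of Γ, and each S_{v_i}^{m_i} denotes an m_i-fold partial star avoiding v_i (adding m_i new vertices). -/
/-!
A complex is a matroid complex iff it satisfies the augmentation axiom (`AugCplx`), and both
directions are proved through that axiom.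

If a complex satisfies augmentation, so does its partial star: a new vertex `w` behaves as a
parallel copy of `v`, so replacing `w` by `v` turns faces of the partial star into faces of the
original complex of the same size, where augmentation can be applied (`partialStar_aug`).

Conversely, in a matroid complex non-adjacency in the 1-skeleton is transitive (`parallel_trans`),
and non-adjacent vertices can be exchanged in any face (`parallel_exchange`). Let `U` be a maximal
clique of the 1-skeleton. By maximality, each vertex outside `U` is non-adjacent to some `u ∈ U`,
and by transitivity to only one. Restoring these classes one at a time is exactly taking
partial stars starting from the restriction to `U` (`partialStar_cplxRes`), so the given complex
is the iterated partial star itself, with the identity as isomorphism.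
-/


variable {α : Type*} [DecidableEq α]

/-- Iterated partial stars `S_{v_k}^{W_k} ⋯ S_{v_1}^{W_1} Γ`, given as a list
`l = [(v_1, W_1), …, (v_k, W_k)]`. -/
def iterStar (Γ : Set (Finset α)) (l : List (α × Finset α)) : Set (Finset α) :=
  l.foldl (fun Δ p => partialStar Δ p.1 p.2) Γ

/-- All the new vertices added in an iterated partial star. -/
def newVerts (l : List (α × Finset α)) : Finset α :=
  l.foldr (fun p s => p.2 ∪ s) ∅

/-- `Δ` (a complex on vertex set `V`) is isomorphic to `Δ'` (a complex on vertex
set `V'`): a bijection of the vertex sets carrying faces exactly to faces. -/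
def IsoOn {β : Type*} [DecidableEq β] (Δ : Set (Finset α)) (V : Finset α)
    (Δ' : Set (Finset β)) (V' : Finset β) : Prop :=
  ∃ f : α → β, Set.BijOn f ↑V ↑V' ∧ ∀ F : Finset α, F ⊆ V → (F ∈ Δ ↔ F.image f ∈ Δ')

/-- The augmentation (independent set exchange) axiom of matroids. -/
def AugCplx (Δ : Set (Finset α)) : Prop :=
  ∀ F ∈ Δ, ∀ G ∈ Δ, F.card < G.card → ∃ x ∈ G, x ∉ F ∧ insert x F ∈ Δ

lemma aug_of_pure {Δ : Set (Finset α)} {V : Finset α} (hsub : ∀ F ∈ Δ, F ⊆ V)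
    (hp : ∀ W ⊆ V, IsPureCplx (cplxRes Δ W)) (hcx : IsCplx Δ) : AugCplx Δ := by
  intro F hF G hG hlt
  by_contra! hno
  have hfin : (cplxRes Δ (F ∪ G)).Finite :=
    (F ∪ G).powerset.finite_toSet.subset fun H hH =>
      Finset.mem_coe.2 (Finset.mem_powerset.2 hH.2)
  obtain ⟨G', hGG', hG'⟩ := hfin.exists_le_maximal
    (show G ∈ cplxRes Δ (F ∪ G) from ⟨hG, Finset.subset_union_right⟩)
  have hFmax : ∀ H ∈ cplxRes Δ (F ∪ G), F ⊆ H → H = F := by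
    intro H hH hFH
    refine Finset.Subset.antisymm (fun x hx => ?_) hFH
    by_contra hxF
    have hxG : x ∈ G := (Finset.mem_union.1 (hH.2 hx)).resolve_left hxF
    exact hno x hxG hxF (hcx H hH.1 _ (Finset.insert_subset hx hFH))
  have hcard := hp (F ∪ G) (Finset.union_subset (hsub F hF) (hsub G hG)) F
    ⟨hF, Finset.subset_union_left⟩ G' hG'.prop hFmax
    (fun H hH hle => Finset.Subset.antisymm (hG'.2 hH hle) hle)
  have := Finset.card_le_card hGG'
  omega

lemma pure_of_aug {Δ : Set (Finset α)} (ha : AugCplx Δ) (W : Finset α) :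
    IsPureCplx (cplxRes Δ W) := by
  have key : ∀ F ∈ cplxRes Δ W, ∀ G ∈ cplxRes Δ W,
      (∀ H ∈ cplxRes Δ W, F ⊆ H → H = F) → G.card ≤ F.card := by
    intro F hF G hG hmax
    by_contra! hlt
    obtain ⟨x, hxG, hxF, hx⟩ := ha F hF.1 G hG.1 hlt
    have := hmax (insert x F) ⟨hx, Finset.insert_subset (hG.2 hxG) hF.2⟩
      (Finset.subset_insert _ _)
    exact hxF (this ▸ Finset.mem_insert_self x F)
  intro F hF G hG hFm hGm
  exact le_antisymm (key G hG F hF hGm) (key F hF G hG hFm)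

/-! ### Partial stars preserve augmentation -/

lemma mem_linkCplx_singleton {Δ : Set (Finset α)} (hcx : IsCplx Δ) {v : α} {E : Finset α} :
    E ∈ linkCplx Δ {v} ↔ v ∉ E ∧ insert v E ∈ Δ := by
  constructor
  · rintro ⟨-, h2, h3⟩
    refine ⟨fun hv => ?_, by rwa [Finset.insert_eq]⟩
    have : v ∈ ({v} : Finset α) ∩ E := by simp [hv]
    simp [h2] at this
  · rintro ⟨h1, h2⟩
    exact ⟨hcx _ h2 _ (Finset.subset_insert _ _), by simp [h1], by rwa [← Finset.insert_eq]⟩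

lemma mem_partialStar {Δ : Set (Finset α)} (hcx : IsCplx Δ) {v : α} {W G : Finset α} :
    G ∈ partialStar Δ v W ↔
      G ∈ Δ ∨ ∃ E, v ∉ E ∧ insert v E ∈ Δ ∧ ∃ w ∈ W, G = insert w E := by
  simp only [partialStar, Set.mem_union, Set.mem_ofPred_eq, mem_linkCplx_singleton hcx, and_assoc]

lemma partialStar_cplx {Δ : Set (Finset α)} (hcx : IsCplx Δ) (v : α) (W : Finset α) :
    IsCplx (partialStar Δ v W) := by
  intro F hF G hGF
  rw [mem_partialStar hcx] at hF ⊢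
  obtain hF | ⟨E, hvE, hE, w, hw, rfl⟩ := hF
  · exact Or.inl (hcx F hF G hGF)
  by_cases hwG : w ∈ G
  · have hGE : G.erase w ⊆ E := fun x hx => by
      have := hGF (Finset.mem_of_mem_erase hx)
      exact (Finset.mem_insert.1 this).resolve_left (Finset.ne_of_mem_erase hx)
    exact Or.inr ⟨G.erase w, fun h => hvE (hGE h), hcx _ hE _ (Finset.insert_subset_insert v hGE),
      w, hw, (Finset.insert_erase hwG).symm⟩
  · refine Or.inl (hcx _ hE _ fun x hx => ?_)
    have := hGF hx
    grind

lemma partialStar_sub {Δ : Set (Finset α)} {U : Finset α} (hcx : IsCplx Δ)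
    (hsub : ∀ F ∈ Δ, F ⊆ U) (v : α) (W : Finset α) :
    ∀ F ∈ partialStar Δ v W, F ⊆ U ∪ W := by
  intro F hF
  rw [mem_partialStar hcx] at hF
  obtain hF | ⟨E, -, hE, w, hw, rfl⟩ := hF
  · exact (hsub F hF).trans Finset.subset_union_left
  · have := hsub _ hE
    intro x hx
    grind

lemma partialStar_aug {Δ : Set (Finset α)} {U : Finset α} (hcx : IsCplx Δ)
    (hsub : ∀ F ∈ Δ, F ⊆ U) (ha : AugCplx Δ) {v : α} {W : Finset α} (hd : Disjoint W U) :
    AugCplx (partialStar Δ v W) := by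
  have hWF : ∀ F ∈ Δ, ∀ w ∈ W, w ∉ F := fun F hF w hw h =>
    Finset.disjoint_left.1 hd hw (hsub F hF h)
  have hcard : ∀ E, v ∉ E → insert v E ∈ Δ → ∀ w ∈ W,
      (insert w E).card = (insert v E).card := by
    intro E hv hE w hw
    have : w ∉ E := fun h => hWF _ hE w hw (Finset.mem_insert_of_mem h)
    rw [Finset.card_insert_of_notMem this, Finset.card_insert_of_notMem hv]
  intro F hF G hG hlt
  rw [mem_partialStar hcx] at hF hG
  simp only [mem_partialStar hcx]
  obtain hF | ⟨E, hvE, hE, w, hw, rfl⟩ := hF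
  · obtain hG | ⟨E', hvE', hE', w', hw', rfl⟩ := hG
    · obtain ⟨x, hxG, hxF, hx⟩ := ha F hF G hG hlt
      exact ⟨x, hxG, hxF, Or.inl hx⟩
    · rw [hcard E' hvE' hE' w' hw'] at hlt
      obtain ⟨x, hxG, hxF, hx⟩ := ha F hF _ hE' hlt
      obtain rfl | hxE := Finset.mem_insert.1 hxG
      -- the face is augmented by `v` in `Δ`, hence by `w'` in the partial star
      · exact ⟨w', Finset.mem_insert_self _ _, hWF F hF w' hw', Or.inr ⟨F, hxF, hx, w', hw', rfl⟩⟩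
      · exact ⟨x, Finset.mem_insert_of_mem hxE, hxF, Or.inl hx⟩
  · rw [hcard E hvE hE w hw] at hlt
    obtain ⟨x, hxG, hxF, hx⟩ : ∃ x ∈ G, x ∉ insert v E ∧ insert x (insert v E) ∈ Δ := by
      obtain hG | ⟨E', hvE', hE', w', hw', rfl⟩ := hG
      · exact ha _ hE G hG hlt
      · rw [hcard E' hvE' hE' w' hw'] at hlt
        obtain ⟨x, hxG, hxF, hx⟩ := ha _ hE _ hE' hlt
        exact ⟨x, by grind, hxF, hx⟩
    have hxw : x ≠ w := fun h => hWF _ hx w hw (h ▸ Finset.mem_insert_self _ _)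
    refine ⟨x, hxG, by grind, Or.inr ⟨insert x E, by grind, ?_, w, hw, Finset.insert_comm _ _ _⟩⟩
    rwa [Finset.insert_comm]

lemma iterStar_aug (l : List (α × Finset α)) : ∀ (Γ : Set (Finset α)) (U : Finset α),
    IsCplx Γ → (∀ F ∈ Γ, F ⊆ U) → AugCplx Γ → (∀ p ∈ l, Disjoint p.2 U) →
    l.Pairwise (fun p q => Disjoint p.2 q.2) → AugCplx (iterStar Γ l) := by
  induction l with
  | nil => intro Γ U _ _ ha _ _; exact ha
  | cons p l ih =>
    intro Γ U hcx hsub ha hd hpw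
    rw [List.pairwise_cons] at hpw
    refine ih (partialStar Γ p.1 p.2) (U ∪ p.2) (partialStar_cplx hcx _ _)
      (partialStar_sub hcx hsub _ _) (partialStar_aug hcx hsub ha (hd p (by simp)))
      (fun q hq => ?_) hpw.2
    exact Finset.disjoint_union_right.2 ⟨hd q (by simp [hq]), (hpw.1 q hq).symm⟩

lemma aug_of_isoOn {Δ Δ' : Set (Finset α)} {V V' : Finset α} (hsub : ∀ F ∈ Δ, F ⊆ V)
    (ha : AugCplx Δ') (h : IsoOn Δ V Δ' V') : AugCplx Δ := by
  obtain ⟨f, hf, hiff⟩ := h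
  intro F hF G hG hlt
  have hcard : ∀ F ∈ Δ, (F.image f).card = F.card := fun F hF =>
    Finset.card_image_of_injOn (hf.injOn.mono (by exact_mod_cast hsub F hF))
  obtain ⟨y, hyG, hyF, hy⟩ := ha _ ((hiff F (hsub F hF)).1 hF) _ ((hiff G (hsub G hG)).1 hG)
    (by rwa [hcard F hF, hcard G hG])
  obtain ⟨x, hx, rfl⟩ := Finset.mem_image.1 hyG
  refine ⟨x, hx, fun h => hyF (Finset.mem_image_of_mem f h), ?_⟩
  rw [hiff _ (Finset.insert_subset (hsub G hG hx) (hsub F hF)), Finset.image_insert]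
  exact hy

/-! ### Non-adjacency in a matroid complex -/

/-- Transitivity of non-adjacency: `x` and `y`, both non-adjacent to `z`, are non-adjacent. -/
lemma parallel_trans {Δ : Set (Finset α)} (ha : AugCplx Δ) {x y z : α} (hz : {z} ∈ Δ)
    (hxy : x ≠ y) (hx : {z, x} ∉ Δ) (hy : {z, y} ∉ Δ) : {x, y} ∉ Δ := by
  intro h
  obtain ⟨t, ht, -, h'⟩ := ha {z} hz {x, y} h (by simp [Finset.card_pair hxy])
  rw [Finset.pair_comm] at h'
  simp only [Finset.mem_insert, Finset.mem_singleton] at ht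
  obtain rfl | rfl := ht
  exacts [hx h', hy h']

/-- A vertex of a face may be replaced by any vertex not adjacent to it. -/
lemma parallel_exchange {Δ : Set (Finset α)} (hcx : IsCplx Δ) (ha : AugCplx Δ) {v w : α}
    (hv : {v} ∈ Δ) (hvw : {v, w} ∉ Δ) {E : Finset α} (hwE : w ∉ E) (hE : insert w E ∈ Δ) :
    insert v E ∈ Δ := by
  -- starting from `{v}`, repeatedly augment from `insert w E`; `w` itself is never chosen
  have hstep : ∀ n ≤ E.card, ∃ A ⊆ E, A.card = n ∧ v ∉ A ∧ insert v A ∈ Δ := by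
    intro n
    induction n with
    | zero => intro _; exact ⟨∅, by simp, by simp, by simp, by simpa using hv⟩
    | succ n ih =>
      intro hn
      obtain ⟨A, hAE, hAn, hvA, hA⟩ := ih (by omega)
      have hlt : (insert v A).card < (insert w E).card := by
        rw [Finset.card_insert_of_notMem hvA, Finset.card_insert_of_notMem hwE]; omega
      obtain ⟨x, hx, hxA, h⟩ := ha _ hA _ hE hlt
      have hxw : x ≠ w := by
        rintro rfl
        exact hvw (hcx _ h _ (by intro t; grind))
      refine ⟨insert x A, ?_, ?_, ?_, ?_⟩
      · exact Finset.insert_subset ((Finset.mem_insert.1 hx).resolve_left hxw) hAE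
      · rw [Finset.card_insert_of_notMem (by grind), hAn]
      · grind
      · rwa [Finset.insert_comm]
  obtain ⟨A, hAE, hAn, -, hA⟩ := hstep _ le_rfl
  rwa [Finset.eq_of_subset_of_card_le hAE hAn.ge] at hA

lemma cplxRes_cplx {Δ : Set (Finset α)} (hcx : IsCplx Δ) (X : Finset α) :
    IsCplx (cplxRes Δ X) := fun F hF G hG => ⟨hcx F hF.1 G hG, hG.trans hF.2⟩

/-- Enlarging a restriction by vertices not adjacent to `v` is a partial star avoiding `v`. -/
lemma partialStar_cplxRes {Δ : Set (Finset α)} (hcx : IsCplx Δ) (ha : AugCplx Δ)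
    {X W : Finset α} {v : α} (hvX : v ∈ X) (hv : {v} ∈ Δ)
    (hW : ∀ w ∈ W, {w} ∈ Δ ∧ {v, w} ∉ Δ) :
    partialStar (cplxRes Δ X) v W = cplxRes Δ (X ∪ W) := by
  ext F
  rw [mem_partialStar (cplxRes_cplx hcx X)]
  constructor
  · rintro (hF | ⟨E, hvE, hE, w, hw, rfl⟩)
    · exact ⟨hF.1, hF.2.trans Finset.subset_union_left⟩
    · refine ⟨parallel_exchange hcx ha (hW w hw).1 (by rw [Finset.pair_comm]; exact (hW w hw).2)
        hvE hE.1, ?_⟩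
      have := hE.2
      intro x hx
      grind
  · rintro ⟨hF, hFX⟩
    by_cases hex : ∃ w ∈ W, w ∈ F
    · obtain ⟨w, hw, hwF⟩ := hex
      -- `w` is the only vertex of `F` in `W ∪ {v}`
      have hvF : v ∉ F := fun h => (hW w hw).2 (hcx _ hF _ (by intro t; grind))
      have huniq : ∀ w' ∈ W, w' ∈ F → w' = w := by
        intro w' hw' hw'F
        by_contra hne
        exact parallel_trans ha hv hne (hW w' hw').2 (hW w hw).2
          (hcx _ hF _ (by intro t; grind))
      refine Or.inr ⟨F.erase w, by grind, ⟨parallel_exchange hcx ha hv (hW w hw).2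
        (Finset.notMem_erase _ _) (by rwa [Finset.insert_erase hwF]), ?_⟩, w, hw,
        (Finset.insert_erase hwF).symm⟩
      intro x hx
      have := @hFX x
      grind
    · refine Or.inl ⟨hF, fun x hx => ?_⟩
      have := hFX hx
      grind

lemma iterStar_cplxRes {Δ : Set (Finset α)} (hcx : IsCplx Δ) (ha : AugCplx Δ)
    (l : List (α × Finset α)) : ∀ X : Finset α,
    (∀ p ∈ l, p.1 ∈ X ∧ {p.1} ∈ Δ ∧ Disjoint p.2 X ∧ ∀ w ∈ p.2, {w} ∈ Δ ∧ {p.1, w} ∉ Δ) →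
    l.Pairwise (fun p q => Disjoint p.2 q.2) →
    iterStar (cplxRes Δ X) l = cplxRes Δ (X ∪ newVerts l) := by
  induction l with
  | nil => intro X _ _; simp [iterStar, newVerts]
  | cons p l ih =>
    intro X h hpw
    rw [List.pairwise_cons] at hpw
    obtain ⟨h1, h2, -, h4⟩ := h p (by simp)
    have := ih (X ∪ p.2) (fun q hq => ?_) hpw.2
    · rw [← partialStar_cplxRes hcx ha h1 h2 h4, Finset.union_assoc] at this
      exact this
    · obtain ⟨g1, g2, g3, g4⟩ := h q (by simp [hq])
      exact ⟨Finset.mem_union_left _ g1, g2,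
        Finset.disjoint_union_right.2 ⟨g3, (hpw.1 q hq).symm⟩, g4⟩

lemma mem_newVerts {l : List (α × Finset α)} {x : α} :
    x ∈ newVerts l ↔ ∃ p ∈ l, x ∈ p.2 := by
  induction l with
  | nil => simp [newVerts]
  | cons p l ih =>
    have : newVerts (p :: l) = p.2 ∪ newVerts l := rfl
    simp [this, ih]

/-- A simplicial complex `Δ` (with nonempty vertex set `V`) is a matroid complex
if and only if `Δ` is isomorphic to `S_{v_k}^{m_k} ⋯ S_{v_1}^{m_1} Γ` where `Γ` is a
matroid complex whose 1-skeleton is a complete graph (possibly a single point),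
and `v_1, …, v_k` are distinct vertices of `Γ`. -/
theorem isMatroidCplx_iff_iterStar (Δ : Set (Finset α)) (V : Finset α)
    (hcx : IsCplx Δ) (hsub : ∀ F ∈ Δ, F ⊆ V) (hvert : ∀ v ∈ V, ({v} : Finset α) ∈ Δ)
    (hne : V.Nonempty) :
    (∀ W ⊆ V, IsPureCplx (cplxRes Δ W)) ↔
      ∃ (Γ : Set (Finset α)) (U : Finset α) (l : List (α × Finset α)),
        IsMatroidCplx Γ U ∧ U.Nonempty ∧ (∀ u ∈ U, ({u} : Finset α) ∈ Γ) ∧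
        (∀ u ∈ U, ∀ w ∈ U, u ≠ w → ({u, w} : Finset α) ∈ Γ) ∧
        (l.map Prod.fst).Nodup ∧ (∀ p ∈ l, p.1 ∈ U) ∧
        (∀ p ∈ l, Disjoint p.2 U) ∧ l.Pairwise (fun p q => Disjoint p.2 q.2) ∧
        IsoOn Δ V (iterStar Γ l) (U ∪ newVerts l) := by
  classical
  constructor
  · intro hp
    have ha := aug_of_pure hsub hp hcx
    obtain ⟨v₀, hv₀⟩ := hne
    -- `U` is a maximal clique of the 1-skeleton
    let C : Set (Finset α) := {U | U ⊆ V ∧ ∀ u ∈ U, ∀ w ∈ U, u ≠ w → ({u, w} : Finset α) ∈ Δ}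
    have hfin : C.Finite := V.powerset.finite_toSet.subset fun H hH =>
      Finset.mem_coe.2 (Finset.mem_powerset.2 hH.1)
    obtain ⟨U, hvU, hU⟩ := hfin.exists_le_maximal (show {v₀} ∈ C from ⟨by simpa using hv₀, by
      intro u hu w hw; grind⟩)
    obtain ⟨hUV, hclique⟩ := hU.prop
    let cls : α → Finset α := fun u => (V \ U).filter fun x => ({u, x} : Finset α) ∉ Δ
    have hcls : ∀ u x, x ∈ cls u ↔ (x ∈ V ∧ x ∉ U) ∧ ({u, x} : Finset α) ∉ Δ := by
      simp [cls]
    let l := U.toList.map fun u => (u, cls u)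
    have hl : ∀ p ∈ l, p.1 ∈ U ∧ p.2 = cls p.1 := by
      intro p hp
      obtain ⟨u, hu, rfl⟩ := List.mem_map.1 hp
      exact ⟨Finset.mem_toList.1 hu, rfl⟩
    have hdisj : ∀ p ∈ l, Disjoint p.2 U := by
      intro p hp
      rw [(hl p hp).2, Finset.disjoint_left]
      exact fun x hx => ((hcls _ _).1 hx).1.2
    have hpw : l.Pairwise (fun p q => Disjoint p.2 q.2) := by
      refine List.pairwise_map.2 (U.nodup_toList.imp_of_mem fun {a b} hA hB hab => ?_)
      rw [Finset.mem_toList] at hA hB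
      refine Finset.disjoint_left.2 fun x hxa hxb => ?_
      rw [hcls] at hxa hxb
      rw [Finset.pair_comm] at hxa hxb
      exact parallel_trans ha (hvert x hxa.1.1) hab hxa.2 hxb.2 (hclique a hA b hB hab)
    have hcover : U ∪ newVerts l = V := by
      ext x
      rw [Finset.mem_union, mem_newVerts]
      constructor
      · rintro (hx | ⟨p, hp, hx⟩)
        · exact hUV hx
        · rw [(hl p hp).2, hcls] at hx
          exact hx.1.1
      · intro hx
        by_contra! hno
        obtain ⟨hxU, hno⟩ := hno
        have hadj : ∀ u ∈ U, ({u, x} : Finset α) ∈ Δ := by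
          intro u hu
          by_contra h
          exact hno (u, cls u) (List.mem_map.2 ⟨u, Finset.mem_toList.2 hu, rfl⟩)
            ((hcls u x).2 ⟨⟨hx, hxU⟩, h⟩)
        have hins : insert x U ∈ C := by
          refine ⟨Finset.insert_subset hx hUV, fun u hu w hw huw => ?_⟩
          obtain rfl | hu' := Finset.mem_insert.1 hu
          · obtain rfl | hw' := Finset.mem_insert.1 hw
            · exact absurd rfl huw
            · rw [Finset.pair_comm]; exact hadj w hw'
          · obtain rfl | hw' := Finset.mem_insert.1 hw
            · exact hadj u hu'
            · exact hclique u hu' w hw' huw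
        exact hxU (hU.2 hins (Finset.subset_insert x U) (Finset.mem_insert_self x U))
    have hiter : iterStar (cplxRes Δ U) l = Δ := by
      rw [iterStar_cplxRes hcx ha l U (fun p hp => ?_) hpw, hcover]
      · ext F
        exact ⟨fun h => h.1, fun h => ⟨h, hsub F h⟩⟩
      · obtain ⟨h1, h2⟩ := hl p hp
        refine ⟨h1, hvert _ (hUV h1), hdisj p hp, fun w hw => ?_⟩
        rw [h2, hcls] at hw
        exact ⟨hvert w hw.1.1, hw.2⟩
    refine ⟨cplxRes Δ U, U, l, ⟨cplxRes_cplx hcx U, fun F hF => hF.2, fun W hW => ?_⟩,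
      ⟨v₀, hvU (by simp)⟩, fun u hu => ⟨hvert u (hUV hu), by simpa using hu⟩,
      fun u hu w hw huw => ⟨hclique u hu w hw huw, by intro t; grind⟩, ?_,
      fun p hp => (hl p hp).1, hdisj, hpw, ?_⟩
    · have : cplxRes (cplxRes Δ U) W = cplxRes Δ W := by
        ext F
        exact ⟨fun h => ⟨h.1.1, h.2⟩, fun h => ⟨⟨h.1, h.2.trans hW⟩, h.2⟩⟩
      rw [this]
      exact hp W (hW.trans hUV)
    · simp only [l, List.map_map]
      simpa [Function.comp_def] using U.nodup_toList
    · rw [hiter, hcover]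
      exact ⟨id, Set.bijOn_id _, fun F _ => by simp⟩
  · rintro ⟨Γ, U, l, ⟨hΓ, hΓU, hΓp⟩, -, -, -, -, -, hd, hpw, hiso⟩ W -
    exact pure_of_aug (aug_of_isoOn hsub
      (iterStar_aug l Γ U hΓ hΓU (aug_of_pure hΓU hΓp hΓ) hd hpw) hiso) W
end

section
/- Let Δ be a 1-dimensional simplicial complex. Then Δ is a matroid complex if and only if for every vertex v of Δ and every edge E of Δ, the vertex set of link_Δ(v) intersects E nontrivially (that is, at least one endpoint of E is joined to v by an edge, or lies in link_Δ(v)). -/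
/-!
For the forward direction, let `v` be a vertex and `E` an edge with `v ∉ E`. If no edge joins `v`
to `E`, then `{v}` and `E` are both maximal faces of the restriction to `insert v E`, which is
therefore not pure.

For the converse, the link condition gives the augmentation property: a face `F` smaller than a
face `G` is properly contained in some face inside `F ∪ G`. Hence among two maximal faces of a
restriction, neither is smaller than the other.
-/

variable {α : Type*} [DecidableEq α]

/-- Augmentation for complexes of dimension at most one: the only case with content is a vertex
`F` and an edge `G`, where it is the link condition. -/
lemma exists_larger_face {Δ : Set (Finset α)} (hdim : ∀ F ∈ Δ, F.card ≤ 2)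
    (hlink : ∀ v, ({v} : Finset α) ∈ Δ → ∀ E ∈ Δ, E.card = 2 →
      ∃ w ∈ E, w ≠ v ∧ ({v, w} : Finset α) ∈ Δ)
    {F G : Finset α} (hF : F ∈ Δ) (hG : G ∈ Δ) (hlt : F.card < G.card) :
    ∃ H ∈ Δ, F ⊆ H ∧ H ⊆ F ∪ G ∧ H ≠ F := by
  have hG2 := hdim G hG
  obtain h0 | h1 : F.card = 0 ∨ F.card = 1 := by omega
  · refine ⟨G, hG, ?_, Finset.subset_union_right, ?_⟩
    · simp [Finset.card_eq_zero.mp h0]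
    · rintro rfl
      omega
  · obtain ⟨v, rfl⟩ := Finset.card_eq_one.mp h1
    obtain ⟨w, hwG, hwv, hvw⟩ := hlink v hF G hG (by omega)
    refine ⟨{v, w}, hvw, by simp, ?_, ?_⟩
    · intro x hx
      simp only [Finset.mem_insert, Finset.mem_singleton] at hx
      rcases hx with rfl | rfl <;> simp [hwG]
    · intro h
      have hw : w ∈ ({v} : Finset α) := h ▸ (by simp)
      exact hwv (Finset.mem_singleton.mp hw)

/-- A 1-dimensional simplicial complex `Δ` is a matroid complex if and only if for
every vertex `v` and every edge `E` of `Δ`, the vertex set of `link_Δ(v)`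
intersects `E` nontrivially. -/
theorem dim1_isMatroidCplx_iff (Δ : Set (Finset α)) (V : Finset α)
    (hcx : IsCplx Δ) (hsub : ∀ F ∈ Δ, F ⊆ V)
    (hdim : ∀ F ∈ Δ, F.card ≤ 2) (hdim' : ∃ F ∈ Δ, F.card = 2) :
    (∀ W ⊆ V, IsPureCplx (cplxRes Δ W)) ↔
      ∀ v, ({v} : Finset α) ∈ Δ → ∀ E ∈ Δ, E.card = 2 →
        ∃ w ∈ E, w ≠ v ∧ ({v, w} : Finset α) ∈ Δ := by
  constructor
  · intro hpure v hv E hE hE2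
    by_contra! hno
    have hvE : v ∉ E := by
      intro hvE
      obtain ⟨w, hwE, hwv⟩ := Finset.exists_mem_ne (by omega : 1 < E.card) v
      refine hno w hwE hwv (hcx E hE _ ?_)
      simp [Finset.insert_subset_iff, hvE, hwE]
    have hW : insert v E ⊆ V :=
      Finset.insert_subset (hsub _ hv (Finset.mem_singleton_self v)) (hsub E hE)
    have hcard := hpure _ hW {v} ⟨hv, by simp⟩ E ⟨hE, Finset.subset_insert v E⟩ ?_ ?_
    · rw [Finset.card_singleton] at hcard
      omega
    · -- A face properly containing `{v}` would contain an edge from `v` to `E`.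
      rintro H ⟨hH, hHW⟩ hvH
      rw [Finset.singleton_subset_iff] at hvH
      refine Finset.eq_singleton_iff_unique_mem.mpr ⟨hvH, fun w hw => ?_⟩
      by_contra hwv
      have hwE : w ∈ E := (Finset.mem_insert.mp (hHW hw)).resolve_left hwv
      refine hno w hwE hwv (hcx H hH _ ?_)
      simp [Finset.insert_subset_iff, hvH, hw]
    · rintro H ⟨hH, -⟩ hEH
      exact (Finset.eq_of_subset_of_card_le hEH (hE2 ▸ hdim H hH)).symm
  · intro hlink W _
    have key : ∀ F ∈ cplxRes Δ W, ∀ G ∈ cplxRes Δ W,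
        (∀ H ∈ cplxRes Δ W, F ⊆ H → H = F) → G.card ≤ F.card := by
      rintro F ⟨hF, hFW⟩ G ⟨hG, hGW⟩ hmax
      by_contra! hlt
      obtain ⟨H, hH, hFH, hHU, hne⟩ := exists_larger_face hdim hlink hF hG hlt
      exact hne (hmax H ⟨hH, hHU.trans (Finset.union_subset hFW hGW)⟩ hFH)
    intro F hF G hG hFmax hGmax
    exact le_antisymm (key G hG F hF hGmax) (key F hF G hG hFmax)
end

section
/- Let m ≥ 0 and h_2 ≥ 0 be integers. Then (1, m, h_2) is the h-vector of a 1-dimensional matroid complex if and only if one of the following holds: (1) h_2 = x(m − x) for some integer x with ⌊m/2⌋ ≤ x ≤ m; or (2) h_2 = h' + x(m − x + 1) for some integer x with ⌊m/2⌋ ≤ x ≤ m and some integer h' ≥ 0 such that (1, x − 1, h') is the h-vector of a 1-dimensional matroid complex. -/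
/-!
The independent pairs of a loopless rank-two matroid are the pairs of non-parallel elements, so
the 1-dimensional matroid complexes are exactly the complete multipartite graphs with at least two
parts. This is `isMatroidHVec_iff_coloring`, where the parts are encoded as the color classes of a
map `c : ℕ → ℕ` on the vertex set; the edges are the pairs on which `c` takes two values.

Separating one part `B` from the remaining vertices `A` gives `e(A ∪ B) = e(A) + |A| |B|`
(`card_bichromatic_union`). With `|A| = x + 1` and `|B| = m + 1 - x` this reads
`h₂ = x (m - x)` if `A` is a single part (so that `e(A) = 0`), and `h₂ = h' + x (m - x + 1)` if `A`
still has two parts and hence h-vector `(1, x - 1, h')`. For the forward direction `B` is a smallest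
part: as there are at least two parts, `2 |B| ≤ m + 2`, which gives `⌊m/2⌋ ≤ x`. Conversely, a part
of any positive size can be adjoined on fresh vertices with a fresh color
(`exists_coloring_extension`).
-/

variable {α : Type*} [DecidableEq α]

/-- `(1, m, h₂)` is the h-vector of a 1-dimensional matroid complex: there is a
1-dimensional matroid complex with `f₀ = m + 2` vertices and `f₁ = h₂ + m + 1` edges
(so that `h₂ = f₁ - f₀ + 1`). -/
def IsMatroidHVec (m h2 : ℤ) : Prop :=
  ∃ (Δ : Set (Finset ℕ)) (V : Finset ℕ),
    IsMatroidCplx Δ V ∧ (∀ v ∈ V, ({v} : Finset ℕ) ∈ Δ) ∧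
    (∀ F ∈ Δ, F.card ≤ 2) ∧ (∃ F ∈ Δ, F.card = 2) ∧
    (V.card : ℤ) = m + 2 ∧ ({F | F ∈ Δ ∧ F.card = 2}.ncard : ℤ) = h2 + m + 1

/-! ### Edges of complete multipartite graphs -/

/-- The edges of the complete multipartite graph on `V` whose parts are the color classes of `c`:
the two-element subsets of `V` that are not monochromatic. -/
def bichromatic (V : Finset ℕ) (c : ℕ → ℕ) : Finset (Finset ℕ) :=
  (V.powersetCard 2).filter fun F => ∃ u ∈ F, ∃ v ∈ F, c u ≠ c v

lemma mem_bichromatic {V : Finset ℕ} {c : ℕ → ℕ} {F : Finset ℕ} :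
    F ∈ bichromatic V c ↔ ∃ u ∈ V, ∃ v ∈ V, c u ≠ c v ∧ F = {u, v} := by
  unfold bichromatic
  simp only [Finset.mem_filter, Finset.mem_powersetCard]
  constructor
  · rintro ⟨⟨hF, h2⟩, u, hu, v, hv, huv⟩
    refine ⟨u, hF hu, v, hF hv, huv, ?_⟩
    symm
    apply Finset.eq_of_subset_of_card_le
    · intro w hw
      simp only [Finset.mem_insert, Finset.mem_singleton] at hw
      rcases hw with rfl | rfl <;> assumption
    · rw [h2, Finset.card_pair (fun h => huv (by rw [h]))]
  · rintro ⟨u, hu, v, hv, huv, rfl⟩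
    refine ⟨⟨?_, Finset.card_pair (fun h => huv (by rw [h]))⟩, u, by simp, v, by simp, huv⟩
    intro w hw
    simp only [Finset.mem_insert, Finset.mem_singleton] at hw
    rcases hw with rfl | rfl <;> assumption

/-- Edge count after adjoining a part `B`: the new edges are the pairs `{a, b}` with `a ∈ A` and
`b ∈ B`. -/
lemma card_bichromatic_union {A B : Finset ℕ} {c : ℕ → ℕ}
    (hAB : ∀ a ∈ A, ∀ b ∈ B, c a ≠ c b) (hB : ∀ b ∈ B, ∀ b' ∈ B, c b = c b') :
    (bichromatic (A ∪ B) c).card = (bichromatic A c).card + A.card * B.card := by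
  classical
  have hsplit : bichromatic (A ∪ B) c =
      bichromatic A c ∪ (A ×ˢ B).image (fun p => ({p.1, p.2} : Finset ℕ)) := by
    ext F
    simp only [Finset.mem_union, mem_bichromatic, Finset.mem_image, Finset.mem_product,
      Prod.exists]
    constructor
    · rintro ⟨u, hu | hu, v, hv | hv, huv, rfl⟩
      · exact Or.inl ⟨u, hu, v, hv, huv, rfl⟩
      · exact Or.inr ⟨u, v, ⟨hu, hv⟩, rfl⟩
      · exact Or.inr ⟨v, u, ⟨hv, hu⟩, Finset.pair_comm _ _⟩
      · exact absurd (hB u hu v hv) huv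
    · rintro (⟨u, hu, v, hv, huv, rfl⟩ | ⟨u, v, ⟨hu, hv⟩, rfl⟩)
      · exact ⟨u, Or.inl hu, v, Or.inl hv, huv, rfl⟩
      · exact ⟨u, Or.inl hu, v, Or.inr hv, hAB u hu v hv, rfl⟩
  have hdisjAB : ∀ x, x ∈ A → x ∈ B → False := fun x hA hB' => hAB x hA x hB' rfl
  rw [hsplit, Finset.card_union_of_disjoint, Finset.card_image_of_injOn, Finset.card_product]
  · rintro ⟨a, b⟩ h ⟨a', b'⟩ h' heq
    simp only [Finset.coe_product, Set.mem_prod, Finset.mem_coe] at h h'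
    simp only at heq
    have h1 : a ∈ ({a', b'} : Finset ℕ) := heq ▸ by simp
    have h2 : b ∈ ({a', b'} : Finset ℕ) := heq ▸ by simp
    simp only [Finset.mem_insert, Finset.mem_singleton] at h1 h2
    grind
  · rw [Finset.disjoint_left]
    intro F hF hF'
    simp only [mem_bichromatic, Finset.mem_image, Finset.mem_product, Prod.exists] at hF hF'
    obtain ⟨u, hu, v, hv, -, rfl⟩ := hF
    obtain ⟨a, b, ⟨ha, hb⟩, heq⟩ := hF'
    have h2 : b ∈ ({u, v} : Finset ℕ) := heq ▸ by simp
    simp only [Finset.mem_insert, Finset.mem_singleton] at h2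
    grind

lemma bichromatic_eq_empty {A : Finset ℕ} {c : ℕ → ℕ}
    (h : ∀ u ∈ A, ∀ v ∈ A, c u = c v) : bichromatic A c = ∅ := by
  rw [Finset.eq_empty_iff_forall_notMem]
  intro F hF
  obtain ⟨u, hu, v, hv, huv, -⟩ := mem_bichromatic.1 hF
  exact huv (h u hu v hv)

lemma card_bichromatic_filter (V : Finset ℕ) (c : ℕ → ℕ) (k : ℕ) :
    (bichromatic V c).card = (bichromatic (V.filter (c · ≠ k)) c).card +
      (V.filter (c · ≠ k)).card * (V.filter (c · = k)).card := by
  rw [← card_bichromatic_union]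
  · congr 2
    ext w
    simp only [Finset.mem_union, Finset.mem_filter]
    tauto
  · intro a ha b hb
    rw [(Finset.mem_filter.1 hb).2]
    exact (Finset.mem_filter.1 ha).2
  · intro b hb b' hb'
    rw [(Finset.mem_filter.1 hb).2, (Finset.mem_filter.1 hb').2]

lemma card_filter_ne_add (V : Finset ℕ) (c : ℕ → ℕ) (k : ℕ) :
    (V.filter (c · ≠ k)).card + (V.filter (c · = k)).card = V.card := by
  rw [add_comm]
  exact Finset.card_filter_add_card_filter_not _

/-- A complete multipartite graph with at least two parts has at least `|V| - 1` edges, so its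
`h₂` is nonnegative. -/
lemma card_le_card_bichromatic {V : Finset ℕ} {c : ℕ → ℕ}
    (h : ∃ u ∈ V, ∃ v ∈ V, c u ≠ c v) : V.card ≤ (bichromatic V c).card + 1 := by
  obtain ⟨u, hu, v, hv, huv⟩ := h
  have h1 := card_bichromatic_filter V c (c u)
  have h2 := card_filter_ne_add V c (c u)
  have h3 : 0 < (V.filter (c · ≠ c u)).card :=
    Finset.card_pos.2 ⟨v, Finset.mem_filter.2 ⟨hv, huv.symm⟩⟩
  have h4 : 0 < (V.filter (c · = c u)).card :=
    Finset.card_pos.2 ⟨u, Finset.mem_filter.2 ⟨hu, rfl⟩⟩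
  nlinarith [Nat.mul_le_mul h3 h4]

/-! ### Complete multipartite graphs are matroid complexes -/

/-- The complex of the complete multipartite graph: rainbow subsets of `V` of size at most two. -/
def rainbowCplx (V : Finset ℕ) (c : ℕ → ℕ) : Set (Finset ℕ) :=
  {F | F ⊆ V ∧ F.card ≤ 2 ∧ Set.InjOn c F}

/-- The augmentation property: if `G` has more elements than `F`, then `G` has a color missing from
`F`, and an element of that color enlarges `F`. -/
lemma rainbowCplx_card_le {V W : Finset ℕ} {c : ℕ → ℕ} {F G : Finset ℕ}
    (hF : F ∈ cplxRes (rainbowCplx V c) W) (hG : G ∈ cplxRes (rainbowCplx V c) W)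
    (hmax : ∀ H ∈ cplxRes (rainbowCplx V c) W, F ⊆ H → H = F) : G.card ≤ F.card := by
  by_contra! hlt
  obtain ⟨⟨hFV, hF2, hFi⟩, hFW⟩ := hF
  obtain ⟨⟨hGV, hG2, hGi⟩, hGW⟩ := hG
  have hlt' : (F.image c).card < (G.image c).card := by
    rwa [Finset.card_image_of_injOn hFi, Finset.card_image_of_injOn hGi]
  obtain ⟨k, hkG, hkF⟩ := Finset.exists_mem_notMem_of_card_lt_card hlt'
  obtain ⟨g, hg, rfl⟩ := Finset.mem_image.1 hkG
  have hgF : g ∉ F := fun h => hkF (Finset.mem_image_of_mem c h)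
  have hins : insert g F ∈ cplxRes (rainbowCplx V c) W := by
    refine ⟨⟨Finset.insert_subset (hGV hg) hFV, ?_, ?_⟩, Finset.insert_subset (hGW hg) hFW⟩
    · rw [Finset.card_insert_of_notMem hgF]; omega
    · rw [Finset.coe_insert, Set.injOn_insert (by simpa using hgF)]
      refine ⟨hFi, ?_⟩
      rwa [← Finset.coe_image, Finset.mem_coe]
  have := hmax _ hins (Finset.subset_insert _ _)
  exact hgF (this ▸ Finset.mem_insert_self g F)

lemma rainbowCplx_isMatroid (V : Finset ℕ) (c : ℕ → ℕ) :
    IsMatroidCplx (rainbowCplx V c) V := by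
  refine ⟨?_, fun F hF => hF.1, ?_⟩
  · rintro F ⟨h1, h2, h3⟩ G hG
    exact ⟨hG.trans h1, (Finset.card_le_card hG).trans h2, h3.mono (by exact_mod_cast hG)⟩
  · intro W _ F hF G hG hFm hGm
    exact le_antisymm (rainbowCplx_card_le hG hF hGm) (rainbowCplx_card_le hF hG hFm)

lemma pair_mem_rainbowCplx {V : Finset ℕ} {c : ℕ → ℕ} {u v : ℕ}
    (hu : u ∈ V) (hv : v ∈ V) (huv : c u ≠ c v) : {u, v} ∈ rainbowCplx V c := by
  refine ⟨?_, Finset.card_le_two, ?_⟩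
  · intro w hw
    simp only [Finset.mem_insert, Finset.mem_singleton] at hw
    rcases hw with rfl | rfl <;> assumption
  · intro a ha b hb hab
    simp only [Finset.coe_insert, Finset.coe_singleton, Set.mem_insert_iff,
      Set.mem_singleton_iff] at ha hb
    grind

lemma rainbowCplx_edges (V : Finset ℕ) (c : ℕ → ℕ) :
    {F | F ∈ rainbowCplx V c ∧ F.card = 2} = (bichromatic V c : Set (Finset ℕ)) := by
  ext F
  simp only [Set.mem_ofPred_eq, Finset.mem_coe, mem_bichromatic]
  constructor
  · rintro ⟨⟨hV, -, hi⟩, h2⟩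
    obtain ⟨u, v, huv, rfl⟩ := Finset.card_eq_two.1 h2
    exact ⟨u, hV (by simp), v, hV (by simp),
      fun h => huv (hi (by simp) (by simp) h), rfl⟩
  · rintro ⟨u, hu, v, hv, huv, rfl⟩
    exact ⟨pair_mem_rainbowCplx hu hv huv, Finset.card_pair (fun h => huv (by rw [h]))⟩

/-! ### One-dimensional matroid complexes are complete multipartite -/

/-- Parallelism in a rank-two matroid is transitive: a vertex `v` is joined to at least one end of
every edge `{u, w}`, as otherwise `{v}` and `{u, w}` are both maximal in the restriction to
`{u, v, w}`. -/
lemma matroid_edge_or {Δ : Set (Finset ℕ)} {V : Finset ℕ} (hM : IsMatroidCplx Δ V)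
    (hV : ∀ v ∈ V, ({v} : Finset ℕ) ∈ Δ) (h2 : ∀ F ∈ Δ, F.card ≤ 2) {u v w : ℕ}
    (hv : v ∈ V) (huw : u ≠ w) (he : {u, w} ∈ Δ) :
    (u ≠ v ∧ {u, v} ∈ Δ) ∨ (v ≠ w ∧ {v, w} ∈ Δ) := by
  by_contra! hcon
  obtain ⟨hc1, hc2⟩ := hcon
  have huv : u ≠ v := by
    rintro rfl
    exact hc2 huw he
  have hvw : v ≠ w := by
    rintro rfl
    exact hc1 huv he
  have hsub := hM.2.1 _ he
  have hW : ({u, v, w} : Finset ℕ) ⊆ V := by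
    intro x hx
    simp only [Finset.mem_insert, Finset.mem_singleton] at hx
    rcases hx with rfl | rfl | rfl
    · exact hsub (by simp)
    · exact hv
    · exact hsub (by simp)
  have := hM.2.2 _ hW {v} ⟨hV v hv, by simp⟩ {u, w}
    ⟨he, by
      intro x hx
      simp only [Finset.mem_insert, Finset.mem_singleton] at hx ⊢
      tauto⟩ ?_ ?_
  · rw [Finset.card_singleton, Finset.card_pair huw] at this
    omega
  · rintro H ⟨hH, hHW⟩ hvH
    have hvH' : v ∈ H := hvH (by simp)
    -- A face containing `v` and another vertex of `{u, v, w}` would contain a missing edge.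
    have hu : u ∉ H := fun hu => hc1 huv (hM.1 H hH _ (by
      intro x hx
      simp only [Finset.mem_insert, Finset.mem_singleton] at hx
      rcases hx with rfl | rfl <;> assumption))
    have hw : w ∉ H := fun hw => hc2 hvw (hM.1 H hH _ (by
      intro x hx
      simp only [Finset.mem_insert, Finset.mem_singleton] at hx
      rcases hx with rfl | rfl <;> assumption))
    refine Finset.Subset.antisymm ?_ hvH
    intro x hx
    have := hHW hx
    simp only [Finset.mem_insert, Finset.mem_singleton] at this ⊢
    rcases this with rfl | rfl | rfl
    · exact absurd hx hu
    · rfl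
    · exact absurd hx hw
  · rintro H ⟨hH, -⟩ hsubH
    symm
    apply Finset.eq_of_subset_of_card_le hsubH
    rw [Finset.card_pair huw]
    exact h2 H hH

open Classical in
/-- A color for each vertex of a complex, namely a code for its set of neighbors. In a complete
multipartite graph, two vertices lie in the same part iff they have the same neighbors. -/
noncomputable def neighborColor (Δ : Set (Finset ℕ)) (V : Finset ℕ) (v : ℕ) : ℕ :=
  Encodable.encode (V.filter fun w => v ≠ w ∧ {v, w} ∈ Δ)

lemma neighborColor_ne_iff {Δ : Set (Finset ℕ)} {V : Finset ℕ} (hM : IsMatroidCplx Δ V)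
    (hV : ∀ v ∈ V, ({v} : Finset ℕ) ∈ Δ) (h2 : ∀ F ∈ Δ, F.card ≤ 2) {u v : ℕ}
    (hu : u ∈ V) (hv : v ∈ V) :
    neighborColor Δ V u ≠ neighborColor Δ V v ↔ u ≠ v ∧ {u, v} ∈ Δ := by
  classical
  unfold neighborColor
  rw [Encodable.encode_injective.ne_iff]
  constructor
  · intro hne
    by_contra hcon
    apply hne
    ext w
    simp only [Finset.mem_filter, and_congr_right_iff]
    intro _
    have hcon' : ¬ (v ≠ u ∧ {v, u} ∈ Δ) := by
      rwa [Finset.pair_comm, ne_comm]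
    constructor
    · rintro ⟨huw, he⟩
      exact (matroid_edge_or hM hV h2 hv huw he).resolve_left hcon
    · rintro ⟨hvw, he⟩
      exact (matroid_edge_or hM hV h2 hu hvw he).resolve_left hcon'
  · rintro ⟨huv, he⟩ heq
    have : v ∈ V.filter fun w => u ≠ w ∧ {u, w} ∈ Δ := Finset.mem_filter.2 ⟨hv, huv, he⟩
    rw [heq] at this
    exact (Finset.mem_filter.1 this).2.1 rfl

/-- The 1-dimensional matroid complexes are the complete multipartite graphs with at least two
parts, in terms of h-vectors. -/
lemma isMatroidHVec_iff_coloring (m h2 : ℤ) :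
    IsMatroidHVec m h2 ↔ ∃ (V : Finset ℕ) (c : ℕ → ℕ), (∃ u ∈ V, ∃ v ∈ V, c u ≠ c v) ∧
      (V.card : ℤ) = m + 2 ∧ ((bichromatic V c).card : ℤ) = h2 + m + 1 := by
  constructor
  · rintro ⟨Δ, V, hM, hV, hle, ⟨F, hF, hF2⟩, hcard, hedges⟩
    refine ⟨V, neighborColor Δ V, ?_, hcard, ?_⟩
    · obtain ⟨u, v, huv, rfl⟩ := Finset.card_eq_two.1 hF2
      have hsub := hM.2.1 _ hF
      have hu : u ∈ V := hsub (by simp)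
      have hv : v ∈ V := hsub (by simp)
      exact ⟨u, hu, v, hv, (neighborColor_ne_iff hM hV hle hu hv).2 ⟨huv, hF⟩⟩
    · rw [← hedges, ← Set.ncard_coe_finset]
      congr 2
      ext G
      simp only [Finset.mem_coe, mem_bichromatic, Set.mem_ofPred_eq]
      constructor
      · rintro ⟨u, hu, v, hv, huv, rfl⟩
        rw [neighborColor_ne_iff hM hV hle hu hv] at huv
        exact ⟨huv.2, Finset.card_pair huv.1⟩
      · rintro ⟨hG, hG2⟩
        obtain ⟨u, v, huv, rfl⟩ := Finset.card_eq_two.1 hG2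
        have hsub := hM.2.1 _ hG
        have hu : u ∈ V := hsub (by simp)
        have hv : v ∈ V := hsub (by simp)
        exact ⟨u, hu, v, hv, (neighborColor_ne_iff hM hV hle hu hv).2 ⟨huv, hG⟩, rfl⟩
  · rintro ⟨V, c, ⟨u, hu, v, hv, huv⟩, hcard, hedges⟩
    refine ⟨rainbowCplx V c, V, rainbowCplx_isMatroid V c, ?_, fun F hF => hF.2.1,
      ⟨{u, v}, pair_mem_rainbowCplx hu hv huv, Finset.card_pair (fun h => huv (by rw [h]))⟩,
      hcard, ?_⟩
    · intro w hw
      exact ⟨by simpa using hw, by simp, by simp⟩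
    · rw [rainbowCplx_edges, Set.ncard_coe_finset, hedges]

/-! ### Adjoining and removing a part -/

/-- A part of size `b` can be adjoined to any nonempty complete multipartite graph. -/
lemma exists_coloring_extension (A : Finset ℕ) (c : ℕ → ℕ) (hA : A.Nonempty) {b : ℕ}
    (hb : 0 < b) : ∃ (V : Finset ℕ) (d : ℕ → ℕ), (∃ u ∈ V, ∃ v ∈ V, d u ≠ d v) ∧
      V.card = A.card + b ∧
      (bichromatic V d).card = (bichromatic A c).card + A.card * b := by
  classical
  -- The vertices from `N` on lie outside `A`, and no vertex of `A` has color `K`.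
  set N := A.sup id + 1 with hN
  set K := A.sup c + 1 with hK
  have hNA : ∀ a ∈ A, a < N := fun a ha => Nat.lt_succ_of_le (Finset.le_sup (f := id) ha)
  have hKA : ∀ a ∈ A, c a < K := fun a ha => Nat.lt_succ_of_le (Finset.le_sup (f := c) ha)
  set d : ℕ → ℕ := fun v => if v < N then c v else K with hd
  have hdA : ∀ a ∈ A, d a = c a := fun a ha => if_pos (hNA a ha)
  have hdB : ∀ b' ∈ Finset.Ico N (N + b), d b' = K := fun b' hb' =>
    if_neg (not_lt.2 (Finset.mem_Ico.1 hb').1)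
  have hne : ∀ a ∈ A, ∀ b' ∈ Finset.Ico N (N + b), d a ≠ d b' := by
    intro a ha b' hb'
    rw [hdA a ha, hdB b' hb']
    exact (hKA a ha).ne
  refine ⟨A ∪ Finset.Ico N (N + b), d, ?_, ?_, ?_⟩
  · obtain ⟨a, ha⟩ := hA
    have hNB : N ∈ Finset.Ico N (N + b) := Finset.mem_Ico.2 ⟨le_rfl, by omega⟩
    exact ⟨a, Finset.mem_union_left _ ha, N, Finset.mem_union_right _ hNB, hne a ha N hNB⟩
  · rw [Finset.card_union_of_disjoint, Nat.card_Ico]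
    · omega
    · rw [Finset.disjoint_left]
      intro a ha hb'
      exact hne a ha a hb' rfl
  · rw [card_bichromatic_union hne (fun x hx y hy => by rw [hdB x hx, hdB y hy]), Nat.card_Ico]
    have : bichromatic A d = bichromatic A c := by
      ext F
      simp only [mem_bichromatic]
      constructor
      · rintro ⟨u, hu, v, hv, huv, rfl⟩
        rw [hdA u hu, hdA v hv] at huv
        exact ⟨u, hu, v, hv, huv, rfl⟩
      · rintro ⟨u, hu, v, hv, huv, rfl⟩
        rw [← hdA u hu, ← hdA v hv] at huv
        exact ⟨u, hu, v, hv, huv, rfl⟩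
    rw [this, Nat.add_sub_cancel_left]

/-- With at least two parts, a smallest part contains at most half of the vertices. -/
lemma exists_small_part {V : Finset ℕ} {c : ℕ → ℕ} (h : ∃ u ∈ V, ∃ v ∈ V, c u ≠ c v) :
    ∃ k, 0 < (V.filter (c · = k)).card ∧ 0 < (V.filter (c · ≠ k)).card ∧
      2 * (V.filter (c · = k)).card ≤ V.card := by
  obtain ⟨u, hu, v, hv, huv⟩ := h
  obtain ⟨w, hw, hmin⟩ := Finset.exists_min_image V
    (fun w => (V.filter (c · = c w)).card) ⟨u, hu⟩
  obtain ⟨z, hz, hzw⟩ : ∃ z ∈ V, c z ≠ c w := by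
    by_cases h : c u = c w
    · exact ⟨v, hv, fun h' => huv (h.trans h'.symm)⟩
    · exact ⟨u, hu, h⟩
  have h1 := hmin z hz
  have h2 : (V.filter (c · = c z)).card ≤ (V.filter (c · ≠ c w)).card := by
    apply Finset.card_le_card
    intro y hy
    rw [Finset.mem_filter] at hy ⊢
    exact ⟨hy.1, by rw [hy.2]; exact hzw⟩
  have h3 := card_filter_ne_add V c (c w)
  refine ⟨c w, Finset.card_pos.2 ⟨w, Finset.mem_filter.2 ⟨hw, rfl⟩⟩,
    Finset.card_pos.2 ⟨z, Finset.mem_filter.2 ⟨hz, hzw⟩⟩, ?_⟩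
  omega

/-! ### The recursive description of the h-vectors -/

/-- `(1, m, h₂)` is the h-vector of a 1-dimensional matroid complex iff either
`h₂ = x (m - x)` for some `⌊m/2⌋ ≤ x ≤ m`, or `h₂ = h' + x (m - x + 1)` for some
`⌊m/2⌋ ≤ x ≤ m` and some `h' ≥ 0` with `(1, x - 1, h')` a matroid h-vector. -/
theorem isMatroidHVec_iff (m h2 : ℤ) (hm : 0 ≤ m) (hh : 0 ≤ h2) :
    IsMatroidHVec m h2 ↔
      ((∃ x : ℤ, m / 2 ≤ x ∧ x ≤ m ∧ h2 = x * (m - x)) ∨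
       (∃ x h' : ℤ, m / 2 ≤ x ∧ x ≤ m ∧ 0 ≤ h' ∧ IsMatroidHVec (x - 1) h' ∧
          h2 = h' + x * (m - x + 1))) := by
  constructor
  · rw [isMatroidHVec_iff_coloring]
    rintro ⟨V, c, hc, hcard, hedges⟩
    obtain ⟨k, hB, hA, hhalf⟩ := exists_small_part hc
    have hE := card_bichromatic_filter V c k
    have hn := card_filter_ne_add V c k
    set A := V.filter (c · ≠ k)
    set b := (V.filter (c · = k)).card
    have hb : (b : ℤ) = m + 2 - A.card := by omega
    have hE' : h2 + m + 1 = (bichromatic A c).card + (A.card : ℤ) * (m + 2 - A.card) := by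
      rw [← hedges, hE, ← hb]; push_cast; ring
    by_cases hmono : ∃ u ∈ A, ∃ v ∈ A, c u ≠ c v
    · right
      -- `hpos` gives `0 ≤ h'`, and `hhalf` gives `m / 2 ≤ x` with `x = |A| - 1`.
      have hpos := card_le_card_bichromatic hmono
      refine ⟨A.card - 1, (bichromatic A c).card - A.card + 1, by omega, by omega, by omega, ?_,
        by linear_combination hE'⟩
      rw [isMatroidHVec_iff_coloring]
      exact ⟨A, c, hmono, by ring, by ring⟩
    · left
      push Not at hmono
      rw [bichromatic_eq_empty hmono, Finset.card_empty] at hE'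
      exact ⟨A.card - 1, by omega, by omega, by push_cast at hE'; linear_combination hE'⟩
  · rw [isMatroidHVec_iff_coloring m]
    rintro (⟨x, hx, hxm, rfl⟩ | ⟨x, h', hx, hxm, -, hvec, rfl⟩)
    · obtain ⟨a, rfl⟩ := Int.eq_ofNat_of_zero_le (show 0 ≤ x by omega)
      -- A single part of size `a + 1` is extended by a part of size `b = m + 1 - a`.
      obtain ⟨b, hb⟩ := Int.eq_ofNat_of_zero_le (show 0 ≤ m + 1 - a by omega)
      obtain ⟨V, d, hd, hV, hE⟩ := exists_coloring_extension (Finset.range (a + 1)) (fun _ => 0)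
        ⟨0, by simp⟩ (show 0 < b by omega)
      rw [bichromatic_eq_empty (c := fun _ => 0) (fun _ _ _ _ => rfl), Finset.card_empty] at hE
      rw [Finset.card_range] at hV hE
      refine ⟨V, d, hd, by omega, ?_⟩
      rw [hE]
      push_cast
      rw [← hb]
      ring
    · rw [isMatroidHVec_iff_coloring] at hvec
      obtain ⟨A, c, ⟨u, hu, -⟩, hA, hEA⟩ := hvec
      obtain ⟨b, hb⟩ := Int.eq_ofNat_of_zero_le (show 0 ≤ m + 1 - x by omega)
      obtain ⟨V, d, hd, hV, hE⟩ := exists_coloring_extension A c ⟨u, hu⟩ (show 0 < b by omega)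
      refine ⟨V, d, hd, by omega, ?_⟩
      rw [hE]
      push_cast
      rw [hEA, hA, ← hb]
      ring
end

section
/- Let n ≥ 2 and h_2 ≥ 0 be integers. Then (1, n − 2, h_2) is the h-vector of a 1-dimensional matroid complex with n vertices if and only if there exist an integer k ≥ 1 and nonnegative integers m_1, m_2, …, m_k with Σ_{i=1}^k m_i = n − k and h_2 = C(n−1, 2) − Σ_{i=1}^k C(m_i + 1, 2), where C(a, b) denotes the binomial coefficient (taken to be 0 when a < b). -/
/-!
A complex of dimension at most one is a graph, and it is a matroid complex exactly when the graph is
complete multipartite. If purity holds on every triple of vertices, then non-adjacency is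
transitive (`exists_multipartite_coloring`): were `x, z` adjacent but `y` adjacent to neither, the
restriction to `{x, y, z}` would have the facets `{x, z}` and `{y}`. Conversely the complete
multipartite complex of any coloring satisfies the exchange property
(`card_le_card_of_maximal`).

If the parts have sizes `m i + 1`, there are `C(n, 2) - ∑ C(m i + 1, 2)` edges
(`card_bichromatic_add`), and `C(n, 2) = C(n - 1, 2) + (n - 1)` turns this into the formula for `h₂`.
The case `k = 1` has no edges, but it is excluded because it would force `h₂ = -(n - 1) < 0`.
-/

variable {α : Type*} [DecidableEq α]

open Finset in
/-- The pairs in `V` not separated by the coloring `c` are the pairs inside a color class. -/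
theorem card_bichromatic_add {κ : Type*} [DecidableEq κ] (V : Finset ℕ) (c : ℕ → κ)
    (I : Finset κ) (hI : ∀ x ∈ V, c x ∈ I) (Δ : Set (Finset ℕ))
    (hΔV : ∀ F ∈ Δ, F ⊆ V)
    (hΔ : ∀ x ∈ V, ∀ y ∈ V, x ≠ y → (({x, y} : Finset ℕ) ∈ Δ ↔ c x ≠ c y)) :
    {F | F ∈ Δ ∧ F.card = 2}.ncard + ∑ i ∈ I, (V.filter (fun x => c x = i)).card.choose 2
      = V.card.choose 2 := by
  classical
  have h1 : {F | F ∈ Δ ∧ F.card = 2} =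
      ((powersetCard 2 V).filter (fun F => F ∈ Δ) : Set (Finset ℕ)) := by
    ext F
    simp only [Set.mem_ofPred_eq, coe_filter, mem_powersetCard]
    exact ⟨fun h => ⟨⟨hΔV F h.1, h.2⟩, h.1⟩, fun h => ⟨h.2, h.1.2⟩⟩
  have h2 : (powersetCard 2 V).filter (fun F => ¬ F ∈ Δ)
      = I.biUnion (fun i => powersetCard 2 (V.filter (fun x => c x = i))) := by
    ext F
    simp only [mem_filter, mem_powersetCard, mem_biUnion]
    constructor
    · rintro ⟨⟨hFV, hF⟩, hn⟩
      obtain ⟨x, y, hxy, rfl⟩ := card_eq_two.1 hF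
      have hx : x ∈ V := hFV (by simp)
      have hy : y ∈ V := hFV (by simp)
      rw [hΔ x hx y hy hxy, not_not] at hn
      refine ⟨c x, hI x hx, ?_, hF⟩
      intro z hz
      simp only [mem_insert, mem_singleton] at hz
      rcases hz with rfl | rfl <;> simp [*]
    · rintro ⟨i, -, hFi, hF⟩
      refine ⟨⟨hFi.trans (filter_subset _ _), hF⟩, ?_⟩
      obtain ⟨x, y, hxy, rfl⟩ := card_eq_two.1 hF
      have hx := mem_filter.1 (hFi (show x ∈ {x, y} by simp))
      have hy := mem_filter.1 (hFi (show y ∈ {x, y} by simp))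
      rw [hΔ x hx.1 y hy.1 hxy, not_not, hx.2, hy.2]
  have h3 : (I.biUnion (fun i => powersetCard 2 (V.filter (fun x => c x = i)))).card
      = ∑ i ∈ I, (V.filter (fun x => c x = i)).card.choose 2 := by
    rw [card_biUnion]
    · simp only [card_powersetCard]
    · intro i _ j _ hij
      rw [Function.onFun, disjoint_left]
      intro F hF hF'
      rw [mem_powersetCard] at hF hF'
      obtain ⟨x, hx⟩ : F.Nonempty := card_pos.1 (by omega)
      exact hij ((mem_filter.1 (hF.1 hx)).2.symm.trans (mem_filter.1 (hF'.1 hx)).2)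
  rw [h1, Set.ncard_coe_finset, ← h3, ← h2, card_filter_add_card_filter_not, card_powersetCard]

/-- The graph of a matroid complex is complete multipartite: color a vertex by the set of
vertices not adjacent to it. -/
theorem exists_multipartite_coloring (Δ : Set (Finset ℕ)) (V : Finset ℕ)
    (hM : IsMatroidCplx Δ V) (hV : ∀ v ∈ V, ({v} : Finset ℕ) ∈ Δ)
    (h2 : ∀ F ∈ Δ, F.card ≤ 2) :
    ∃ c : ℕ → Finset ℕ, ∀ x ∈ V, ∀ y ∈ V, x ≠ y →
      (({x, y} : Finset ℕ) ∈ Δ ↔ c x ≠ c y) := by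
  classical
  have key : ∀ x ∈ V, ∀ y ∈ V, ∀ z ∈ V, ({x, y} : Finset ℕ) ∉ Δ → ({y, z} : Finset ℕ) ∉ Δ →
      x ≠ z → ({x, z} : Finset ℕ) ∉ Δ := by
    intro x hx y hy z hz hxy hyz hne hxz
    have hp := hM.2.2 {x, y, z} (by
      intro w hw
      simp only [Finset.mem_insert, Finset.mem_singleton] at hw
      rcases hw with rfl | rfl | rfl <;> assumption)
    have hc := hp {x, z} ⟨hxz, by intro w; simp; tauto⟩ {y} ⟨hV y hy, by simp⟩
      (by
        rintro H ⟨hH, -⟩ hs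
        exact (Finset.eq_of_subset_of_card_le hs (by
          rw [Finset.card_pair hne]; exact h2 H hH)).symm)
      (by
        rintro H ⟨hH, hW⟩ hs
        refine Finset.Subset.antisymm (fun w hw => ?_) hs
        have hyH : y ∈ H := hs (by simp)
        have hm := hW hw
        simp only [Finset.mem_insert, Finset.mem_singleton] at hm ⊢
        rcases hm with rfl | rfl | rfl
        · exact absurd (hM.1 H hH _ (Finset.insert_subset hw (by simpa using hyH))) hxy
        · rfl
        · exact absurd (hM.1 H hH _ (Finset.insert_subset hyH (by simpa using hw))) hyz)
    rw [Finset.card_pair hne] at hc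
    simp at hc
  refine ⟨fun x => V.filter (fun y => y = x ∨ ({x, y} : Finset ℕ) ∉ Δ), ?_⟩
  intro x hx y hy hne
  constructor
  · intro h he
    have : x ∈ V.filter (fun z => z = y ∨ ({y, z} : Finset ℕ) ∉ Δ) := by
      exact (Finset.ext_iff.1 he x).1 (by simp [hx] : x ∈ V.filter (fun z => z = x ∨ ({x, z} : Finset ℕ) ∉ Δ))
    simp only [Finset.mem_filter] at this
    rcases this.2 with h' | h'
    · exact hne h'
    · exact h' (by rwa [Finset.pair_comm])
  · intro h
    by_contra hn
    apply h
    have hn' : ({y, x} : Finset ℕ) ∉ Δ := by rwa [Finset.pair_comm]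
    ext w
    simp only [Finset.mem_filter, and_congr_right_iff]
    intro hw
    constructor
    · rintro (rfl | hxw)
      · exact Or.inr hn'
      · by_cases hyw : w = y
        · exact Or.inl hyw
        · exact Or.inr (key y hy x hx w hw hn' hxw (Ne.symm hyw))
    · rintro (rfl | hyw)
      · exact Or.inr hn
      · by_cases hxw : w = x
        · exact Or.inl hxw
        · exact Or.inr (key x hx y hy w hw hn hyw (Ne.symm hxw))

/-- The complete multipartite complex of a coloring `c` on `V`: sets of at most two vertices on
which `c` is injective. -/
def multipartiteCplx {κ : Type*} (V : Finset ℕ) (c : ℕ → κ) : Set (Finset ℕ) :=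
  {F | F ⊆ V ∧ F.card ≤ 2 ∧ ∀ x ∈ F, ∀ y ∈ F, c x = c y → x = y}

/-- Exchange: a facet of a restriction of a complete multipartite complex is at least as large as
any face, since of two differently colored vertices one avoids any given color. -/
theorem card_le_card_of_maximal {κ : Type*} (V : Finset ℕ) (c : ℕ → κ) (W F G : Finset ℕ)
    (hF : F ∈ cplxRes (multipartiteCplx V c) W) (hG : G ∈ cplxRes (multipartiteCplx V c) W)
    (hmax : ∀ H ∈ cplxRes (multipartiteCplx V c) W, F ⊆ H → H = F) : G.card ≤ F.card := by
  by_contra! hlt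
  obtain ⟨⟨hFV, hF2, hFc⟩, hFW⟩ := hF
  obtain ⟨⟨hGV, hG2, hGc⟩, hGW⟩ := hG
  have hadd : ∃ a ∈ G, ∀ x ∈ F, c x ≠ c a := by
    by_contra! hno
    choose! f hf hfc using hno
    obtain ⟨a, ha, b, hb, hab, he⟩ :=
      Finset.exists_ne_map_eq_of_card_lt_of_maps_to hlt (f := f) (fun a ha => hf a ha)
    exact hab (hGc a ha b hb (by rw [← hfc a ha, ← hfc b hb, he]))
  obtain ⟨a, ha, hac⟩ := hadd
  have haF : a ∉ F := fun h => hac a h rfl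
  have := hmax (insert a F) ⟨⟨Finset.insert_subset (hGV ha) hFV, by
      rw [Finset.card_insert_of_notMem haF]; omega, by
      intro x hx y hy hxy
      rw [Finset.mem_insert] at hx hy
      rcases hx with rfl | hx <;> rcases hy with rfl | hy
      · rfl
      · exact absurd hxy.symm (hac y hy)
      · exact absurd hxy (hac x hx)
      · exact hFc x hx y hy hxy⟩, Finset.insert_subset (hGW ha) hFW⟩ (Finset.subset_insert _ _)
  exact haF (this ▸ Finset.mem_insert_self a F)

theorem multipartiteCplx_isMatroid {κ : Type*} (V : Finset ℕ) (c : ℕ → κ) :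
    IsMatroidCplx (multipartiteCplx V c) V := by
  refine ⟨?_, fun F hF => hF.1, ?_⟩
  · rintro F ⟨hFV, hF2, hFc⟩ G hGF
    exact ⟨hGF.trans hFV, (Finset.card_le_card hGF).trans hF2,
      fun x hx y hy => hFc x (hGF hx) y (hGF hy)⟩
  · intro W _ F hF G hG hFm hGm
    exact le_antisymm (card_le_card_of_maximal V c W G F hG hF hGm)
      (card_le_card_of_maximal V c W F G hF hG hFm)

theorem exists_coloring_fibers {k : ℕ} (hk : 1 ≤ k) (a : Fin k → ℕ) :
    ∃ c : ℕ → Fin k, ∀ i, ((Finset.range (∑ i, a i)).filter (fun x => c x = i)).card = a i := by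
  let e := finSigmaFinEquiv (n := a)
  refine ⟨fun x => if h : x < ∑ i, a i then (e.symm ⟨x, h⟩).1 else ⟨0, hk⟩, fun i => ?_⟩
  have : (Finset.range (∑ i, a i)).filter
      (fun x => (if h : x < ∑ i, a i then (e.symm ⟨x, h⟩).1 else ⟨0, hk⟩) = i)
      = (Finset.univ : Finset (Fin (a i))).image (fun j => (e ⟨i, j⟩ : ℕ)) := by
    ext x
    simp only [Finset.mem_filter, Finset.mem_range, Finset.mem_image, Finset.mem_univ, true_and]
    constructor
    · rintro ⟨hx, h⟩
      rw [dif_pos hx] at h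
      subst h
      exact ⟨(e.symm ⟨x, hx⟩).2, by simp⟩
    · rintro ⟨j, rfl⟩
      refine ⟨(e ⟨i, j⟩).2, ?_⟩
      rw [dif_pos (e ⟨i, j⟩).2]
      simp
  rw [this, Finset.card_image_of_injective, Finset.card_univ, Fintype.card_fin]
  intro j j' h
  simpa using e.injective (Fin.ext h)

/-- `(1, n - 2, h₂)` is the h-vector of a 1-dimensional matroid complex with `n`
vertices iff there are `k ≥ 1` and nonnegative integers `m_1, …, m_k` with
`Σ m_i = n - k` and `h₂ = C(n-1, 2) - Σ C(m_i + 1, 2)`. -/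
theorem isMatroidHVec_iff_binomial (n h2 : ℕ) (hn : 2 ≤ n) :
    (∃ (Δ : Set (Finset ℕ)) (V : Finset ℕ),
        IsMatroidCplx Δ V ∧ (∀ v ∈ V, ({v} : Finset ℕ) ∈ Δ) ∧
        (∀ F ∈ Δ, F.card ≤ 2) ∧ (∃ F ∈ Δ, F.card = 2) ∧
        V.card = n ∧ ({F | F ∈ Δ ∧ F.card = 2}.ncard : ℤ) = (h2 : ℤ) + n - 1) ↔
      ∃ (k : ℕ) (m : Fin k → ℕ), 1 ≤ k ∧ (∑ i, m i) + k = n ∧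
        (h2 : ℤ) = ((n - 1).choose 2 : ℤ) - ∑ i, ((m i + 1).choose 2 : ℤ) := by
  classical
  obtain ⟨p, rfl⟩ : ∃ p, n = p + 1 := ⟨n - 1, by omega⟩
  have hchoose : (p + 1).choose 2 = p + p.choose 2 := by
    rw [Nat.choose_succ_succ' p 1, Nat.choose_one_right]
  rw [Nat.add_sub_cancel]
  constructor
  · rintro ⟨Δ, V, hM, hV, h2', -, hn', hcard⟩
    obtain ⟨c, hc⟩ := exists_multipartite_coloring Δ V hM hV h2'
    have hI : ∀ x ∈ V, c x ∈ V.image c := fun x hx => Finset.mem_image_of_mem c hx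
    have hcount := card_bichromatic_add V c (V.image c) hI Δ hM.2.1 hc
    have hsum := Finset.card_eq_sum_card_fiberwise (f := c) (s := V) (t := V.image c) hI
    set s : Finset ℕ → ℕ := fun i => (V.filter (fun x => c x = i)).card with hs
    let e := (V.image c).equivFin
    -- Color classes are nonempty, so the subtraction in `m i = s (e.symm i) - 1` does not truncate.
    have hpos : ∀ i : V.image c, 1 ≤ s i := by
      rintro ⟨i, hi⟩
      obtain ⟨x, hx, rfl⟩ := Finset.mem_image.1 hi
      exact Finset.card_pos.2 ⟨x, by simp [hx]⟩
    have hre : ∀ g : ℕ → ℕ, ∑ i, g (s (e.symm i)) = ∑ i ∈ V.image c, g (s i) := by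
      intro g
      rw [Equiv.sum_comp e.symm (fun i => g (s i)), Finset.sum_coe_sort _ (fun i => g (s i))]
    have hm : ∀ i, s (e.symm i) - 1 + 1 = s (e.symm i) := fun i => Nat.sub_add_cancel (hpos _)
    refine ⟨(V.image c).card, fun i => s (e.symm i) - 1, ?_, ?_, ?_⟩
    · have : V.Nonempty := Finset.card_pos.1 (by omega)
      exact Finset.card_pos.2 (this.image c)
    · have h1 : ∑ i, (s (e.symm i) - 1 + 1) = p + 1 := by
        simp only [hm]
        rw [hre (fun x => x), ← hsum, hn']
      simpa [Finset.sum_add_distrib] using h1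
    · simp only [hm]
      have h1 := hre (fun x => x.choose 2)
      rw [← Nat.cast_sum, h1]
      rw [hn', hchoose] at hcount
      have hcount' : _ + ∑ i ∈ V.image c, (s i).choose 2 = _ := hcount
      omega
  · rintro ⟨k, m, hk, hsum, hh⟩
    obtain ⟨c, hc⟩ := exists_coloring_fibers hk (fun i => m i + 1)
    have hN : ∑ i, (m i + 1) = p + 1 := by simpa [Finset.sum_add_distrib] using hsum
    rw [hN] at hc
    have hcount := card_bichromatic_add (Finset.range (p + 1)) c Finset.univ (by simp)
      (multipartiteCplx (Finset.range (p + 1)) c) (fun F hF => hF.1) (by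
        intro x hx y hy hxy
        constructor
        · rintro ⟨-, -, h⟩ he
          exact hxy (h x (by simp) y (by simp) he)
        · intro h
          refine ⟨Finset.insert_subset hx (by simpa using hy), Finset.card_le_two, ?_⟩
          intro a ha b hb hab
          simp only [Finset.mem_insert, Finset.mem_singleton] at ha hb
          rcases ha with rfl | rfl <;> rcases hb with rfl | rfl
          · rfl
          · exact absurd hab h
          · exact absurd hab.symm h
          · rfl)
    simp only [hc, Finset.card_range, hchoose] at hcount
    rw [← Nat.cast_sum] at hh
    refine ⟨multipartiteCplx (Finset.range (p + 1)) c, Finset.range (p + 1),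
      multipartiteCplx_isMatroid _ _, ?_, fun F hF => hF.2.1, ?_, by simp, by omega⟩
    · intro v hv
      refine ⟨by simpa using hv, by simp, ?_⟩
      intro x hx y hy _
      rw [Finset.mem_singleton] at hx hy
      rw [hx, hy]
    -- The number of edges is `h₂ + n - 1 ≥ 1`.
    · exact Set.nonempty_of_ncard_ne_zero (by omega :
        {F | F ∈ multipartiteCplx (Finset.range (p + 1)) c ∧ F.card = 2}.ncard ≠ 0)
end

section
/- Let Δ be a 1-dimensional simplicial complex on [n] = {1, …, n} containing every singleton {i} as a face. Then Δ is a matroid complex if and only if there exist pairwise disjoint subsets σ_1, …, σ_k of [n] such that the edges of Δ are exactly the 2-element subsets of [n] not contained in any σ_i. (Equivalently, the Stanley–Reisner ideal of Δ has the form I_Δ = Σ_{i=1}^k m̂²_{σ_i} + m̂³, where m̂^d_σ denotes the ideal generated by the squarefree degree-d monomials in the variables indexed by σ.) -/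
/-!
Call two vertices *parallel* if they are equal or do not span an edge. For a 1-dimensional
complex with all singletons, `Δ` is a matroid complex exactly when parallelism is transitive,
and the `σ i` are then the parallel classes.

If `a ∥ b ∥ c` but `{a, c}` is an edge, the restriction to `{a, b, c}` has the facets `{b}` and
`{a, c}` of different sizes (`nonedge_trans`), so purity forces transitivity. The classes are
realised as the fibers of a map sending each vertex to a representative of its class, whose
cardinalities add up to `n`.

Conversely, facets of different sizes in a restriction are `{b}` and `{a, c}` with `{a, b}` and
`{b, c}` non-edges. Each of these lies in some `σ i`, and it is the same one since both contain
`b`; hence `{a, c}` lies in it too, contradicting that it is an edge (`not_facet_card_lt`).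
-/

variable {α : Type*} [DecidableEq α]

theorem nonedge_trans {n : ℕ} {Δ : Set (Finset (Fin n))}
    (hcx : IsCplx Δ) (hvert : ∀ v : Fin n, ({v} : Finset (Fin n)) ∈ Δ)
    (hdim : ∀ F ∈ Δ, F.card ≤ 2) (hpure : ∀ W : Finset (Fin n), IsPureCplx (cplxRes Δ W))
    {a b c : Fin n} (hac : a ≠ c)
    (h1 : ({a, b} : Finset (Fin n)) ∉ Δ) (h2 : ({b, c} : Finset (Fin n)) ∉ Δ) :
    ({a, c} : Finset (Fin n)) ∉ Δ := by
  intro h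
  have key := hpure {a, b, c} {b} ⟨hvert b, by simp⟩ {a, c}
    ⟨h, by intro x; simp; tauto⟩ ?_ ?_
  · rw [Finset.card_pair hac] at key
    simp at key
  · rintro H ⟨hH, hHW⟩ hbH
    have hb : b ∈ H := hbH (by simp)
    ext x
    constructor
    · intro hx
      have hxW := hHW hx
      simp only [Finset.mem_insert, Finset.mem_singleton] at hxW ⊢
      rcases hxW with rfl | rfl | rfl
      · exact absurd (hcx H hH _ (by simp [Finset.insert_subset_iff, hx, hb])) h1
      · rfl
      · exact absurd (hcx H hH _ (by simp [Finset.insert_subset_iff, hx, hb])) h2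
    · exact fun hx => hbH hx
  · rintro H ⟨hH, _⟩ hs
    exact (Finset.eq_of_subset_of_card_le hs
      (by rw [Finset.card_pair hac]; exact hdim H hH)).symm

theorem not_facet_card_lt {n k : ℕ} {Δ : Set (Finset (Fin n))} {σ : Fin k → Finset (Fin n)}
    (hvert : ∀ v : Fin n, ({v} : Finset (Fin n)) ∈ Δ) (hdim : ∀ F ∈ Δ, F.card ≤ 2)
    (hdisj : ∀ i j, i ≠ j → Disjoint (σ i) (σ j))
    (hedge : ∀ E : Finset (Fin n), E.card = 2 → (E ∈ Δ ↔ ∀ i, ¬E ⊆ σ i))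
    {W F G : Finset (Fin n)} (hG : G ∈ cplxRes Δ W) (hFW : F ⊆ W)
    (hFmax : ∀ H ∈ cplxRes Δ W, F ⊆ H → H = F) : ¬F.card < G.card := by
  intro hlt
  have hG2 := hdim G hG.1
  rcases Nat.eq_zero_or_pos F.card with h0 | hpos
  · rw [Finset.card_eq_zero] at h0
    subst h0
    obtain ⟨v, hv⟩ := Finset.card_pos.1 (by simpa using hlt)
    have := hFmax {v} ⟨hvert v, by simpa using hG.2 hv⟩ (by simp)
    simp at this
  · obtain ⟨b, rfl⟩ := Finset.card_eq_one.1 (show F.card = 1 by omega)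
    obtain ⟨a, c, hac, rfl⟩ := Finset.card_eq_two.1
      (show G.card = 2 by rw [Finset.card_singleton] at hlt; omega)
    have hbW : b ∈ W := hFW (by simp)
    -- A vertex of `G` cannot be `b` (else `G` extends `{b}`) nor span an edge with `b`.
    have hpar : ∀ x ∈ ({a, c} : Finset (Fin n)), ∃ i, x ∈ σ i ∧ b ∈ σ i := by
      intro x hx
      have hxb : x ≠ b := by
        rintro rfl
        have := congrArg Finset.card (hFmax _ hG (by simpa using hx))
        rw [this] at hlt
        exact lt_irrefl _ hlt
      have hE : ({x, b} : Finset (Fin n)) ∉ Δ := by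
        intro hE
        have := congrArg Finset.card (hFmax _ ⟨hE, by
          simp [Finset.insert_subset_iff, hG.2 hx, hbW]⟩ (by simp))
        rw [Finset.card_pair hxb, Finset.card_singleton] at this
        omega
      rw [hedge _ (Finset.card_pair hxb)] at hE
      push Not at hE
      obtain ⟨i, hi⟩ := hE
      exact ⟨i, hi (by simp), hi (by simp)⟩
    obtain ⟨i, hai, hbi⟩ := hpar a (by simp)
    obtain ⟨j, hcj, hbj⟩ := hpar c (by simp)
    have hij : i = j := by
      by_contra hne
      exact Finset.disjoint_left.1 (hdisj i j hne) hbi hbj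
    subst hij
    exact (hedge _ (Finset.card_pair hac)).1 hG.1 i (by simp [Finset.insert_subset_iff, hai, hcj])

/-- A 1-dimensional complex `Δ` on `[n]` containing all singletons is a matroid
complex iff there are pairwise disjoint subsets `σ_1, …, σ_k` of `[n]` (with
`Σ |σ_i| ≤ n`) such that the edges of `Δ` are exactly the 2-element subsets of `[n]`
not contained in any `σ_i`; equivalently `I_Δ = Σ m̂²_{σ_i} + m̂³`. -/
theorem dim1_matroid_iff_SR_ideal (n : ℕ) (Δ : Set (Finset (Fin n)))
    (hcx : IsCplx Δ) (hvert : ∀ v : Fin n, ({v} : Finset (Fin n)) ∈ Δ)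
    (hdim : ∀ F ∈ Δ, F.card ≤ 2) (hdim' : ∃ F ∈ Δ, F.card = 2) :
    (∀ W : Finset (Fin n), IsPureCplx (cplxRes Δ W)) ↔
      ∃ (k : ℕ) (σ : Fin k → Finset (Fin n)),
        (∀ i j, i ≠ j → Disjoint (σ i) (σ j)) ∧ (∑ i, (σ i).card) ≤ n ∧
        ∀ E : Finset (Fin n), E.card = 2 → (E ∈ Δ ↔ ∀ i, ¬E ⊆ σ i) := by
  constructor
  · intro hpure
    let s : Setoid (Fin n) :=
      { r := fun a b => a = b ∨ ({a, b} : Finset (Fin n)) ∉ Δ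
        iseqv :=
          { refl := fun a => Or.inl rfl
            symm := by
              rintro a b (h | h)
              · exact Or.inl h.symm
              · exact Or.inr (by rwa [Finset.pair_comm])
            trans := by
              rintro a b c (rfl | h1) (rfl | h2)
              · exact Or.inl rfl
              · exact Or.inr h2
              · exact Or.inr h1
              · by_cases hac : a = c
                · exact Or.inl hac
                · exact Or.inr (nonedge_trans hcx hvert hdim hpure hac h1 h2) } }
    let f : Fin n → Fin n := fun v => (Quotient.mk s v).out
    have hf : ∀ a b, f a = f b ↔ (a = b ∨ ({a, b} : Finset (Fin n)) ∉ Δ) := fun a b =>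
      Quotient.out_inj.trans Quotient.eq
    refine ⟨n, fun i => Finset.univ.filter (fun v => f v = i), ?_, ?_, ?_⟩
    · intro i j hij
      rw [Finset.disjoint_left]
      intro x hx hy
      simp only [Finset.mem_filter, Finset.mem_univ, true_and] at hx hy
      exact hij (hx.symm.trans hy)
    · rw [← Finset.card_eq_sum_card_fiberwise (fun _ _ => Finset.mem_coe.2 (Finset.mem_univ _))]
      simp
    · intro E hE
      obtain ⟨a, b, hab, rfl⟩ := Finset.card_eq_two.1 hE
      have := hf a b
      simp only [hab, false_or] at this
      rw [← not_iff_not, ← this]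
      simp [Finset.insert_subset_iff, eq_comm]
  · rintro ⟨k, σ, hdisj, -, hedge⟩ W F hF G hG hFmax hGmax
    exact le_antisymm
      (not_lt.1 (not_facet_card_lt hvert hdim hdisj hedge hF hG.2 hGmax))
      (not_lt.1 (not_facet_card_lt hvert hdim hdisj hedge hG hF.2 hFmax))
end

section
/- A 1-dimensional matroid complex Δ_m, for a sequence m = (m_1, …, m_s) of nonnegative integers with s ≥ 2, is isomorphic to a shifted simplicial complex if and only if m contains at most one nonzero entry. -/
/-!
The complex `DeltaM m` is the complete multipartite graph with blocks of sizes `m i + 1`, so the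
nonfaces of size two are the pairs inside a block.

If two blocks contain pairs `{a, c}` and `{b, d}`, take an ordering that makes the complex shifted.
The edge `{c, b}` and the nonedge `{d, b}` rule out `d < c`, while the edge `{d, a}` and the nonedge
`{c, a}` rule out `c < d`; hence `c = d`, which is absurd.

Conversely, if at most one block has more than one vertex, order the vertices so that this block
comes last. Edges are then the pairs with at most one vertex in a final segment, a condition
preserved when a vertex is lowered.
-/

variable {α : Type*} [DecidableEq α]

/-- The 1-dimensional matroid complex `Δ_m` for a sequence `m = (m_1, …, m_s)`:
obtained from the complete graph `K_s` by successively, for `i = 1, …, s`, adding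
`m_i` new vertices each joined by an edge to every current vertex except `v_i`.
Concretely, the vertex in block `i` are the `m_i + 1` elements `⟨i, j⟩` (the vertex
`v_i` of `K_s` together with the `m_i` vertices added avoiding `v_i`), and the faces
are the sets of at most 2 vertices containing no two vertices in a common block. -/
def DeltaM {s : ℕ} (m : Fin s → ℕ) : Set (Finset ((i : Fin s) × Fin (m i + 1))) :=
  {F | F.card ≤ 2 ∧ ∀ a ∈ F, ∀ b ∈ F, a ≠ b → a.1 ≠ b.1}

/-- In a shifted complex isomorphic to `DeltaM m` through `f`, if a block contains `b ≠ d`, then `d`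
does not precede any vertex `c` outside that block: the edge `{b, c}` would shift to `{b, d}`. -/
lemma not_lt_of_shifted {s : ℕ} {m : Fin s → ℕ} {Δ' : Set (Finset ℕ)} {W : Finset ℕ}
    {f : ((i : Fin s) × Fin (m i + 1)) → ℕ} (hinj : Function.Injective f) (hW : ∀ x, f x ∈ W)
    (hsh : ∀ F ∈ Δ', ∀ v ∈ F, ∀ w ∈ W, w < v → w ∉ F → insert w (F.erase v) ∈ Δ')
    (hf : ∀ F : Finset ((i : Fin s) × Fin (m i + 1)), F ∈ DeltaM m ↔ F.image f ∈ Δ')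
    {b c d : (i : Fin s) × Fin (m i + 1)} (hbd : b ≠ d) (hblock : b.1 = d.1)
    (hcb : c.1 ≠ b.1) : ¬ f d < f c := by
  intro hlt
  have hne : c ≠ b := fun h => hcb (by rw [h])
  have hedge : ({c, b} : Finset _) ∈ DeltaM m := by
    refine ⟨Finset.card_le_two, ?_⟩
    simp only [Finset.mem_insert, Finset.mem_singleton]
    rintro x (rfl | rfl) y (rfl | rfl) hxy
    · exact absurd rfl hxy
    · exact hcb
    · exact hcb.symm
    · exact absurd rfl hxy
  have hface := (hf _).1 hedge
  rw [Finset.image_insert, Finset.image_singleton] at hface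
  have hdc : f d ≠ f c := hlt.ne
  have hdb : f d ≠ f b := fun h => hbd (hinj h).symm
  have hcb' : f c ∉ ({f b} : Finset ℕ) := by
    rw [Finset.mem_singleton]
    exact fun h => hne (hinj h)
  have hshift := hsh _ hface (f c) (Finset.mem_insert_self _ _) (f d) (hW d) hlt (by
    simp [hdc, hdb])
  rw [Finset.erase_insert hcb'] at hshift
  have hbad : ({d, b} : Finset _) ∈ DeltaM m := (hf _).2 (by
    rwa [Finset.image_insert, Finset.image_singleton])
  exact hbad.2 b (by simp) d (by simp) hbd hblock

/-- The labelling that puts the vertices of the block `i₀` after all others. It forgets the second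
coordinate outside `i₀`, so it is injective only when all other blocks are singletons. -/
def blockLast {s : ℕ} (m : Fin s → ℕ) (i₀ : Fin s) (x : (i : Fin s) × Fin (m i + 1)) : ℕ :=
  if x.1 = i₀ then s + x.2 else x.1

lemma le_blockLast_iff {s : ℕ} (m : Fin s → ℕ) (i₀ : Fin s) (x : (i : Fin s) × Fin (m i + 1)) :
    s ≤ blockLast m i₀ x ↔ x.1 = i₀ := by
  unfold blockLast
  have := x.1.isLt
  split_ifs with h
  · simp [h]
  · simp [h]

lemma eq_of_fst_eq {s : ℕ} {m : Fin s → ℕ} {i₀ : Fin s} (h₀ : ∀ i, i ≠ i₀ → m i = 0)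
    {x y : (i : Fin s) × Fin (m i + 1)} (h : x.1 = y.1) (hx : x.1 ≠ i₀) : x = y := by
  obtain ⟨i, j⟩ := x
  obtain ⟨i', k⟩ := y
  obtain rfl : i = i' := h
  have hm := h₀ i hx
  have hj := j.isLt
  have hk := k.isLt
  congr 1
  exact Fin.ext (by omega)

lemma blockLast_injective {s : ℕ} {m : Fin s → ℕ} {i₀ : Fin s} (h₀ : ∀ i, i ≠ i₀ → m i = 0) :
    Function.Injective (blockLast m i₀) := by
  intro x y hxy
  have hiff : x.1 = i₀ ↔ y.1 = i₀ := by
    rw [← le_blockLast_iff m i₀ x, ← le_blockLast_iff m i₀ y, hxy]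
  by_cases hx : x.1 = i₀
  · have hy := hiff.1 hx
    simp only [blockLast, hx, hy, if_true] at hxy
    obtain ⟨i, j⟩ := x
    obtain ⟨i', k⟩ := y
    obtain rfl : i = i' := hx.trans hy.symm
    congr 1
    exact Fin.ext (by simpa using hxy)
  · have hy : ¬ y.1 = i₀ := fun h => hx (hiff.2 h)
    simp only [blockLast, hx, hy, if_false] at hxy
    exact eq_of_fst_eq h₀ (Fin.ext hxy) hx

/-- For `s ≥ 2`, the 1-dimensional matroid complex `Δ_m` is isomorphic to a shifted
simplicial complex (a complex on a linearly ordered vertex set, here realized inside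
`ℕ`, such that whenever `F` is a face, `v ∈ F`, and `w` is a vertex with `w < v` and
`w ∉ F`, also `(F \ {v}) ∪ {w}` is a face) if and only if `m` has at most one
nonzero entry. -/
theorem deltaM_shifted_iff (s : ℕ) (hs : 2 ≤ s) (m : Fin s → ℕ) :
    (∃ (Δ' : Set (Finset ℕ)) (W : Finset ℕ),
        IsCplx Δ' ∧ (∀ F ∈ Δ', F ⊆ W) ∧ (∀ w ∈ W, ({w} : Finset ℕ) ∈ Δ') ∧
        (∀ F ∈ Δ', ∀ v ∈ F, ∀ w ∈ W, w < v → w ∉ F → insert w (F.erase v) ∈ Δ') ∧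
        IsoOn (DeltaM m) Finset.univ Δ' W) ↔
      (Finset.univ.filter fun i => m i ≠ 0).card ≤ 1 := by
  constructor
  · rintro ⟨Δ', W, -, -, -, hsh, f, hbij, hf⟩
    have hinj : Function.Injective f := by
      have := hbij.injOn
      rwa [Finset.coe_univ, Set.injOn_univ] at this
    have hW : ∀ x, f x ∈ W := fun x => hbij.mapsTo (by simp)
    have hf' := fun F => hf F (Finset.subset_univ F)
    rw [Finset.card_le_one]
    intro i hi j hj
    by_contra hij
    replace hi : m i ≠ 0 := (Finset.mem_filter.1 hi).2
    replace hj : m j ≠ 0 := (Finset.mem_filter.1 hj).2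
    -- Each of the blocks `i` and `j` contains a vertex besides its first one.
    have hpair : ∀ k, m k ≠ 0 → (⟨k, 0⟩ : (i : Fin s) × Fin (m i + 1)) ≠ ⟨k, Fin.last (m k)⟩ := by
      intro k hk h
      have h2 := congrArg (fun x : (i : Fin s) × Fin (m i + 1) => (x.2 : ℕ)) h
      exact hk (by simpa using h2.symm)
    have h1 := not_lt_of_shifted hinj hW hsh hf' (hpair j hj) rfl
      (c := ⟨i, Fin.last (m i)⟩) hij
    have h2 := not_lt_of_shifted hinj hW hsh hf' (hpair i hi) rfl
      (c := ⟨j, Fin.last (m j)⟩) (Ne.symm hij)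
    exact hij (congrArg Sigma.fst (hinj (le_antisymm (not_lt.1 h1) (not_lt.1 h2))))
  · intro hcard
    obtain ⟨i₀, h₀⟩ : ∃ i₀ : Fin s, ∀ i, i ≠ i₀ → m i = 0 := by
      by_cases h : ∃ i₀, m i₀ ≠ 0
      · obtain ⟨i₀, hi₀⟩ := h
        refine ⟨i₀, fun i hi => ?_⟩
        by_contra hmi
        exact hi (Finset.card_le_one.1 hcard i (by simp [hmi]) i₀ (by simp [hi₀]))
      · push Not at h
        exact ⟨⟨0, by omega⟩, fun i _ => h i⟩
    have hinj := blockLast_injective h₀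
    refine ⟨{G | G ⊆ Finset.univ.image (blockLast m i₀) ∧ G.card ≤ 2 ∧
      ∀ x ∈ G, ∀ y ∈ G, s ≤ x → s ≤ y → x = y}, Finset.univ.image (blockLast m i₀),
      ?_, fun F hF => hF.1, ?_, ?_, blockLast m i₀, ?_, ?_⟩
    · rintro F ⟨h1, h2, h3⟩ G hG
      exact ⟨hG.trans h1, (Finset.card_le_card hG).trans h2,
        fun x hx y hy => h3 x (hG hx) y (hG hy)⟩
    · intro w hw
      refine ⟨Finset.singleton_subset_iff.2 hw, by simp, ?_⟩
      intro x hx y hy _ _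
      rw [Finset.mem_singleton.1 hx, Finset.mem_singleton.1 hy]
    · rintro F ⟨h1, h2, h3⟩ v hv w hw hwv -
      refine ⟨Finset.insert_subset hw ((Finset.erase_subset _ _).trans h1), ?_, ?_⟩
      · have hle := Finset.card_insert_le w (F.erase v)
        rw [Finset.card_erase_add_one hv] at hle
        exact hle.trans h2
      · -- If `w` lies in the final segment, so does `v`, hence no other vertex of `F` does.
        simp only [Finset.mem_insert, Finset.mem_erase]
        rintro x (rfl | ⟨hxv, hx⟩) y (rfl | ⟨hyv, hy⟩) hsx hsy
        · rfl
        · exact absurd (h3 y hy v hv hsy (hsx.trans hwv.le)) hyv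
        · exact absurd (h3 x hx v hv hsx (hsy.trans hwv.le)) hxv
        · exact h3 x hx y hy hsx hsy
    · rw [Finset.coe_image]
      exact hinj.injOn.bijOn_image
    · intro F _
      simp only [DeltaM, Set.mem_ofPred_eq, Finset.card_image_of_injective F hinj,
        Finset.image_subset_image (Finset.subset_univ F), true_and, Finset.forall_mem_image,
        le_blockLast_iff]
      refine and_congr_right fun _ => ⟨fun h x hx y hy hxi hyi => ?_, fun h x hx y hy hxy he => ?_⟩
      · by_contra hne
        exact h x hx y hy (fun e => hne (by rw [e])) (hxi.trans hyi.symm)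
      · by_cases hxi : x.1 = i₀
        · exact hxy (hinj (h hx hy hxi (he ▸ hxi)))
        · exact hxy (eq_of_fst_eq h₀ he hxi)
end

section
/- Let Δ be a 1-dimensional matroid complex with associated partition λ_Δ of length ℓ(λ_Δ). Then, regarding Δ as a graph, every maximal clique of Δ (every subset of vertices W, maximal under inclusion, such that every 2-element subset of W is an edge of Δ) has exactly ℓ(λ_Δ) vertices. -/
/-!
Under the isomorphism with `DeltaM m`, the graph of `Δ` is complete multipartite with `s` nonempty
parts, the blocks `{⟨i, j⟩ : j}`: two distinct vertices are adjacent exactly when their blocks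
differ (`pair_mem_iff`). So a clique meets each block at most once. A maximal clique also meets every
block, since any vertex of a missed block could be added. Hence the block map restricts to a
bijection from a maximal clique onto `Fin s`.
-/

variable {α : Type*} [DecidableEq α]

/-- The edges of a complex isomorphic to `DeltaM m` are the pairs of vertices in distinct blocks.
There is no condition `u ≠ w` on the right, as it follows from the blocks being distinct. -/
lemma pair_mem_iff {Δ : Set (Finset α)} {V : Finset α} {s : ℕ} {m : Fin s → ℕ}
    {f : α → (i : Fin s) × Fin (m i + 1)} (hinj : Set.InjOn f ↑V)
    (hf : ∀ F : Finset α, F ⊆ V → (F ∈ Δ ↔ F.image f ∈ DeltaM m))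
    {u w : α} (hu : u ∈ V) (hw : w ∈ V) :
    (u ≠ w ∧ ({u, w} : Finset α) ∈ Δ) ↔ (f u).1 ≠ (f w).1 := by
  constructor
  · rintro ⟨hne, h⟩
    rw [hf _ (by simp [Finset.insert_subset_iff, hu, hw])] at h
    exact h.2 (f u) (by simp) (f w) (by simp) fun h' => hne (hinj hu hw h')
  · intro h
    refine ⟨fun h' => h (by rw [h']), ?_⟩
    rw [hf _ (by simp [Finset.insert_subset_iff, hu, hw]), Finset.image_insert,
      Finset.image_singleton]
    refine ⟨Finset.card_le_two, ?_⟩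
    intro a ha b hb hab
    simp only [Finset.mem_insert, Finset.mem_singleton] at ha hb
    rcases ha with rfl | rfl <;> rcases hb with rfl | rfl
    · exact absurd rfl hab
    · exact h
    · exact h.symm
    · exact absurd rfl hab

/-- Every maximal clique of a 1-dimensional matroid complex `Δ` with associated
partition `λ_Δ` (i.e. `Δ ≅ Δ_m`, `λ_Δ = (m_1 + 1) + ⋯ + (m_s + 1)`, so
`ℓ(λ_Δ) = s`) has exactly `ℓ(λ_Δ)` vertices. -/
theorem dim1_matroid_max_cliques (Δ : Set (Finset α)) (V : Finset α)
    (s : ℕ) (m : Fin s → ℕ)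
    (hM : IsMatroidCplx Δ V) (hvert : ∀ v ∈ V, ({v} : Finset α) ∈ Δ)
    (hd : ∀ F ∈ Δ, F.card ≤ 2) (he : ∃ F ∈ Δ, F.card = 2)
    (hiso : IsoOn Δ V (DeltaM m) Finset.univ) :
    ∀ W ⊆ V, (∀ u ∈ W, ∀ w ∈ W, u ≠ w → ({u, w} : Finset α) ∈ Δ) →
      (∀ W', W ⊆ W' → W' ⊆ V → (∀ u ∈ W', ∀ w ∈ W', u ≠ w → ({u, w} : Finset α) ∈ Δ) →
        W' = W) →
      W.card = s := by
  intro W hWV hW hmax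
  obtain ⟨f, ⟨-, hinj, hsurj⟩, hf⟩ := hiso
  have hblock : Set.InjOn (fun a => (f a).1) (W : Set α) := by
    intro u hu w hw huw
    by_contra hne
    exact (pair_mem_iff hinj hf (hWV hu) (hWV hw)).1 ⟨hne, hW u hu w hw hne⟩ huw
  have himage : W.image (fun a => (f a).1) = Finset.univ := by
    rw [Finset.eq_univ_iff_forall]
    intro i
    obtain ⟨v, hvV, hv⟩ := hsurj (Finset.mem_coe.2 (Finset.mem_univ ⟨i, 0⟩))
    have hvi : (f v).1 = i := by rw [hv]
    by_contra hi
    have hmiss : ∀ u ∈ W, (f u).1 ≠ (f v).1 := fun u hu h =>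
      hi (Finset.mem_image.2 ⟨u, hu, h.trans hvi⟩)
    have hins : insert v W = W := by
      refine hmax _ (Finset.subset_insert v W) (Finset.insert_subset hvV hWV) ?_
      intro a ha b hb hab
      rcases Finset.mem_insert.1 ha with rfl | haW <;>
        rcases Finset.mem_insert.1 hb with rfl | hbW
      · exact absurd rfl hab
      · exact ((pair_mem_iff hinj hf hvV (hWV hbW)).2 (hmiss b hbW).symm).2
      · exact ((pair_mem_iff hinj hf (hWV haW) hvV).2 (hmiss a haW)).2
      · exact hW a haW b hbW hab
    exact hmiss v (hins ▸ Finset.mem_insert_self v W) rfl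
  rw [← Finset.card_image_of_injOn hblock, himage, Finset.card_univ, Fintype.card_fin]
end

section
/- Let λ be a partition of n with ℓ(λ) parts, and for each i ≥ 1 let a_i be the number of parts of λ equal to i. Then the matroid complexes on the vertex set [n] whose associated partition is λ are in bijection with the set partitions of [n] subordinate to λ (collections of pairwise disjoint subsets ω_1, …, ω_{ℓ(λ)} of [n] with |ω_j| = λ_j for each j); in particular their number equals n! / (a_1! a_2! ⋯ a_k! · (1!)^{a_1} (2!)^{a_2} ⋯ (k!)^{a_k}). -/
/-!
A matroid complex of dimension at most one on `[n]` is a complete multipartite graph: its faces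
are the partial transversals with at most two elements of a set partition, and the blocks of that
partition are the maximal edge-free sets. So `Ω ↦ transversalCplx Ω` is a bijection from set
partitions of type `lam` onto the complexes with associated partition `lam`: the image is a
matroid complex by the exchange property (`transversalCplx_augment`), `Ω` is recovered as the set
of maximal edge-free sets (`mem_iff_maxAnticlique`), and a complex is determined by these
(`eq_transversalCplx`).

Set partitions are counted in two steps through partitions with labelled blocks. The `n!`
bijections of `[n]` with `Σ i, Fin (c i)`, where `c` lists the parts, map onto the labelled
partitions with all fibres of size `∏ i, (c i)!` (`card_labelledPart`), and forgetting labels is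
`∏ k, a_k!`-to-one (`card_labelledPart_eq_mul`). Both fibres are sets of bijections compatible
with maps to a common base, counted in `card_equiv_over` by the order of a stabilizer in a
symmetric group.
-/

variable {α : Type*} [DecidableEq α]

/-- A matroid complex of dimension at most 1 on the vertex set `Fin n`, with every
element of `Fin n` a vertex. -/
def MatroidOn (n : ℕ) (Δ : Set (Finset (Fin n))) : Prop :=
  IsCplx Δ ∧ (∀ v : Fin n, ({v} : Finset (Fin n)) ∈ Δ) ∧ (∀ F ∈ Δ, F.card ≤ 2) ∧
    ∀ W : Finset (Fin n), IsPureCplx (cplxRes Δ W)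

/-- A set partition of `[n]` subordinate to the partition `lam` of `n`: a collection
of pairwise disjoint subsets of `[n]` whose multiset of sizes is the multiset of
parts of `lam`. -/
def Subord (n : ℕ) (lam : n.Partition) (Ω : Finset (Finset (Fin n))) : Prop :=
  (∀ ω ∈ Ω, ∀ ω' ∈ Ω, ω ≠ ω' → Disjoint ω ω') ∧ Ω.val.map Finset.card = lam.parts

/-- `σ` contains no edge of `Δ`. -/
def NoEdgeIn (n : ℕ) (Δ : Set (Finset (Fin n))) (σ : Finset (Fin n)) : Prop :=
  ∀ E ∈ Δ, E.card = 2 → ¬E ⊆ σ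

/-- `σ` is a maximal edge-free subset of the vertex set of `Δ`.  For a matroid
complex of dimension at most 1 these maximal "anticliques" are exactly the blocks of
its defining set partition, so their sizes give the associated partition `λ_Δ`. -/
def MaxAnticlique (n : ℕ) (Δ : Set (Finset (Fin n))) (σ : Finset (Fin n)) : Prop :=
  NoEdgeIn n Δ σ ∧ ∀ σ', σ ⊆ σ' → NoEdgeIn n Δ σ' → σ' = σ

/-! ### Counting set partitions -/

/-- The cardinality of a fibre of `f` is a multiplicity in the multiset of values of `f`. -/
lemma card_fiber_eq_count {A : Type*} [Fintype A] (f : A → ℕ) (k : ℕ) :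
    Nat.card {a // f a = k} = Multiset.count k (Finset.univ.val.map f) := by
  classical
  rw [Nat.card_eq_fintype_card, Fintype.card_subtype, Multiset.count_map]
  simp only [eq_comm (a := k)]
  rfl

/-- Bijections `A ≃ B` over `C` form a torsor under the permutations of `A` over `C`, that is,
under the product of the symmetric groups of the fibres. -/
lemma card_equiv_over {A B C : Type*} [Fintype A] [Fintype B] [DecidableEq C]
    (f : A → C) (h : B → C)
    (H : ∀ c, Nat.card {a // f a = c} = Nat.card {b // h b = c}) :
    Nat.card {e : A ≃ B // h ∘ e = f} =
      ∏ c ∈ Finset.univ.image f, (Nat.card {a // f a = c}).factorial := by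
  classical
  have hE : ∀ c, Nonempty ({a // f a = c} ≃ {b // h b = c}) := fun c =>
    Finite.card_eq.1 (H c)
  let e₀ : A ≃ B := Equiv.ofFiberEquiv (fun c => (hE c).some)
  have he₀ : ∀ a, h (e₀ a) = f a := fun a => Equiv.ofFiberEquiv_map _ a
  have key : Nat.card {e : A ≃ B // h ∘ e = f} = Nat.card {g : Equiv.Perm A // f ∘ g = f} := by
    refine Nat.card_congr (Equiv.subtypeEquiv (Equiv.equivCongr (Equiv.refl A) e₀.symm) ?_)
    intro e
    have : f ∘ (Equiv.equivCongr (Equiv.refl A) e₀.symm e) = h ∘ e := by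
      funext a
      simp [← he₀]
    rw [this]
  rw [key, Nat.card_eq_fintype_card, DomMulAct.stabilizer_card']
  simp only [Nat.card_eq_fintype_card]

lemma card_eq_mul_of_fibers {A B : Type*} [Finite A] [Finite B] (F : A → B) (k : ℕ)
    (h : ∀ b, Nat.card {a // F a = b} = k) : Nat.card A = Nat.card B * k := by
  classical
  have := Fintype.ofFinite B
  rw [← Nat.card_congr (Equiv.sigmaFiberEquiv F), Nat.card_sigma]
  simp [h]

/-- Set partitions with blocks labelled by `ι`, the block labelled `i` having size `c i`. -/
abbrev LabelledPart (n : ℕ) {ι : Type*} (c : ι → ℕ) : Type _ :=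
  {h : ι → Finset (Fin n) // (∀ i j, i ≠ j → Disjoint (h i) (h j)) ∧ ∀ i, (h i).card = c i}

lemma exists_label {n : ℕ} {ι : Type*} [Fintype ι] (c : ι → ℕ) (hc : ∑ i, c i = n)
    (h : LabelledPart n c) : ∃ f : Fin n → ι, ∀ x i, x ∈ h.1 i ↔ f x = i := by
  classical
  have hu : Finset.univ.biUnion h.1 = Finset.univ := by
    rw [← Finset.card_eq_iff_eq_univ, Finset.card_biUnion (fun i _ j _ hij => h.2.1 i j hij)]
    simp [h.2.2, hc]
  have hx : ∀ x, ∃ i, x ∈ h.1 i := fun x => by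
    have hx := Finset.mem_univ x
    rw [← hu] at hx
    simpa using hx
  choose f hf using hx
  refine ⟨f, fun x i => ⟨fun hi => ?_, fun hi => hi ▸ hf x⟩⟩
  by_contra hne
  exact Finset.disjoint_left.1 (h.2.1 _ _ hne) (hf x) hi

/-- Every bijection of `Fin n` with the disjoint union of the `Fin (c i)` determines a labelled
set partition, and each labelled set partition arises `∏ i, (c i)!` times. -/
lemma card_labelledPart {n : ℕ} {ι : Type*} [Fintype ι] (c : ι → ℕ) (hc : ∑ i, c i = n) :
    n.factorial = Nat.card (LabelledPart n c) * ∏ i, (c i).factorial := by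
  classical
  have hE : Nat.card (Fin n ≃ Σ i, Fin (c i)) = n.factorial := by
    rw [Nat.card_eq_fintype_card, Fintype.card_equiv (Fintype.equivOfCardEq (by simp [hc]))]
    simp
  have hfst : ∀ i, Nat.card {p : Σ i, Fin (c i) // p.1 = i} = c i := fun i => by
    rw [Nat.card_congr (Equiv.sigmaSubtype i)]
    simp
  have hsize : ∀ (e : Fin n ≃ Σ i, Fin (c i)) i,
      (Finset.univ.filter fun x => (e x).1 = i).card = c i := fun e i => by
    rw [← Fintype.card_subtype, ← Nat.card_eq_fintype_card, ← hfst i]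
    exact Nat.card_congr (e.subtypeEquiv fun _ => Iff.rfl)
  let F : (Fin n ≃ Σ i, Fin (c i)) → LabelledPart n c := fun e =>
    ⟨fun i => Finset.univ.filter fun x => (e x).1 = i, by
      intro i j hij
      rw [Finset.disjoint_left]
      intro x hx hx'
      simp only [Finset.mem_filter, Finset.mem_univ, true_and] at hx hx'
      exact hij (hx.symm.trans hx'), hsize e⟩
  rw [← hE]
  refine card_eq_mul_of_fibers F _ fun h => ?_
  obtain ⟨f, hf⟩ := exists_label c hc h
  have hfc : ∀ i, Nat.card {x // f x = i} = c i := fun i => by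
    rw [← h.2.2 i, ← Nat.card_eq_finsetCard]
    exact Nat.card_congr (Equiv.subtypeEquivRight fun x => (hf x i).symm)
  have h1 : Nat.card {e // F e = h} =
      Nat.card {e : Fin n ≃ Σ i, Fin (c i) // Sigma.fst ∘ e = f} := by
    refine Nat.card_congr (Equiv.subtypeEquivRight fun e => ?_)
    constructor
    · intro he
      funext x
      have : x ∈ (F e).1 (e x).1 := by simp [F]
      rw [he, hf] at this
      exact this.symm
    · intro he
      apply Subtype.ext
      funext i
      ext x
      rw [hf, ← he]
      simp [F]
  rw [h1, card_equiv_over f Sigma.fst fun i => (hfc i).trans (hfst i).symm]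
  simp only [hfc]
  -- labels with an empty block contribute the factor `0! = 1`
  refine Finset.prod_subset (Finset.subset_univ _) fun i _ hi => ?_
  have : IsEmpty {x // f x = i} := ⟨fun x => hi (Finset.mem_image.2 ⟨x.1, Finset.mem_univ _, x.2⟩)⟩
  rw [← hfc i]
  simp

lemma Subord.pos {n : ℕ} {lam : n.Partition} {Ω : Finset (Finset (Fin n))} (h : Subord n lam Ω)
    {ω : Finset (Fin n)} (hω : ω ∈ Ω) : ω.Nonempty :=
  Finset.card_pos.1 (lam.parts_pos (h.2 ▸ Multiset.mem_map_of_mem _ hω))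

lemma Subord.cover {n : ℕ} {lam : n.Partition} {Ω : Finset (Finset (Fin n))}
    (h : Subord n lam Ω) (x : Fin n) : ∃ ω ∈ Ω, x ∈ ω := by
  have hu : Ω.biUnion (fun ω => ω) = Finset.univ := by
    rw [← Finset.card_eq_iff_eq_univ, Finset.card_biUnion (fun i hi j hj hij => h.1 i hi j hj hij)]
    have : ∑ u ∈ Ω, u.card = (Ω.val.map Finset.card).sum := rfl
    simp [this, h.2, lam.parts_sum]
  have hx := Finset.mem_univ x
  rw [← hu] at hx
  simpa using hx

lemma Subord.eq_of_mem {n : ℕ} {lam : n.Partition} {Ω : Finset (Finset (Fin n))}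
    (h : Subord n lam Ω) {ω ω' : Finset (Fin n)} (hω : ω ∈ Ω) (hω' : ω' ∈ Ω) {x : Fin n}
    (hx : x ∈ ω) (hx' : x ∈ ω') : ω = ω' := by
  by_contra hne
  exact Finset.disjoint_left.1 (h.1 _ hω _ hω' hne) hx hx'

/-- Forgetting labels: each set partition has as many labellings as there are size-preserving
bijections from the labels to its blocks. -/
lemma card_labelledPart_eq_mul {n : ℕ} (lam : n.Partition) {ι : Type*} [Fintype ι] (c : ι → ℕ)
    (hc : Finset.univ.val.map c = lam.parts) :
    Nat.card (LabelledPart n c) = Nat.card {Ω : Finset (Finset (Fin n)) // Subord n lam Ω} *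
      ∏ k ∈ Finset.univ.image c, (Multiset.count k lam.parts).factorial := by
  classical
  have hpos : ∀ i, 0 < c i := fun i =>
    lam.parts_pos (hc ▸ Multiset.mem_map_of_mem c (Finset.mem_univ_val i))
  have hinj : ∀ h : LabelledPart n c, Function.Injective h.1 := fun h i j hij => by
    by_contra hne
    have h1 := h.2.1 i j hne
    rw [hij, disjoint_self, Finset.bot_eq_empty, ← Finset.card_eq_zero, h.2.2] at h1
    exact (hpos j).ne' h1
  let F : LabelledPart n c → {Ω : Finset (Finset (Fin n)) // Subord n lam Ω} := fun h =>
    ⟨Finset.univ.image h.1, by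
      intro ω hω ω' hω' hne
      obtain ⟨i, -, rfl⟩ := Finset.mem_image.1 hω
      obtain ⟨j, -, rfl⟩ := Finset.mem_image.1 hω'
      exact h.2.1 i j fun hij => hne (hij ▸ rfl), by
      rw [Finset.image_val_of_injOn (hinj h).injOn, Multiset.map_map, ← hc]
      exact Multiset.map_congr rfl fun i _ => h.2.2 i⟩
  refine card_eq_mul_of_fibers F _ fun Ω => ?_
  have hι : ∀ k, Nat.card {i // c i = k} = Multiset.count k lam.parts := fun k => by
    rw [card_fiber_eq_count, hc]
  have hΩ : ∀ k, Nat.card {ω : Ω.1 // ω.1.card = k} = Multiset.count k lam.parts := fun k => by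
    rw [card_fiber_eq_count (fun ω : Ω.1 => ω.1.card), ← Ω.2.2]
    congr 1
    exact Multiset.attach_map_val' Ω.1.val Finset.card
  have := card_equiv_over c (fun ω : Ω.1 => ω.1.card) fun k => (hι k).trans (hΩ k).symm
  simp only [hι] at this
  rw [← this]
  symm
  let Φ : {g : ι ≃ Ω.1 // (fun ω : Ω.1 => ω.1.card) ∘ g = c} → {h // F h = Ω} := fun g =>
    ⟨⟨fun i => (g.1 i).1, fun i j hij => Ω.2.1 _ (g.1 i).2 _ (g.1 j).2 fun he =>
        hij (g.1.injective (Subtype.ext he)), fun i => congrFun g.2 i⟩, by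
      apply Subtype.ext
      ext ω
      simp only [F, Finset.mem_image, Finset.mem_univ, true_and]
      constructor
      · rintro ⟨i, rfl⟩
        exact (g.1 i).2
      · intro hω
        exact ⟨g.1.symm ⟨ω, hω⟩, by simp⟩⟩
  refine Nat.card_eq_of_bijective Φ ⟨fun g g' hg => ?_, ?_⟩
  · apply Subtype.ext
    ext1 i
    exact Subtype.ext (congrFun (congrArg (fun h => h.1.1) hg) i)
  · rintro ⟨h, rfl⟩
    refine ⟨⟨Equiv.ofBijective (fun i => ⟨h.1 i, Finset.mem_image_of_mem _ (Finset.mem_univ i)⟩)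
      ⟨fun i j hij => hinj h (congrArg Subtype.val hij), ?_⟩, ?_⟩, ?_⟩
    · rintro ⟨ω, hω⟩
      obtain ⟨i, -, rfl⟩ := Finset.mem_image.1 hω
      exact ⟨i, rfl⟩
    · funext i
      exact h.2.2 i
    · rfl

lemma card_subord (n : ℕ) (lam : n.Partition) :
    Nat.card {Ω : Finset (Finset (Fin n)) // Subord n lam Ω} =
      n.factorial / ∏ i ∈ Finset.Icc 1 n,
        (Nat.factorial (Multiset.count i lam.parts) *
          (Nat.factorial i) ^ (Multiset.count i lam.parts)) := by
  classical
  let c : lam.parts → ℕ := fun x => x.1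
  have hc : Finset.univ.val.map c = lam.parts := Multiset.map_univ_coe lam.parts
  have hsum : ∑ i, c i = n := by
    exact (congrArg Multiset.sum hc).trans lam.parts_sum
  have hsub : lam.parts.toFinset ⊆ Finset.Icc 1 n := fun k hk => by
    rw [Multiset.mem_toFinset] at hk
    exact Finset.mem_Icc.2 ⟨lam.parts_pos hk, lam.le_of_mem_parts hk⟩
  have hzero : ∀ k ∈ Finset.Icc 1 n, k ∉ lam.parts.toFinset → Multiset.count k lam.parts = 0 :=
    fun k _ hk => Multiset.count_eq_zero.2 fun h => hk (Multiset.mem_toFinset.2 h)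
  have himg : Finset.univ.image c = lam.parts.toFinset :=
    congrArg Multiset.toFinset hc
  have h1 : ∏ i, (c i).factorial =
      ∏ k ∈ Finset.Icc 1 n, k.factorial ^ Multiset.count k lam.parts := by
    have : ∏ i, (c i).factorial = (lam.parts.map Nat.factorial).prod := by
      rw [← congrArg (Multiset.map Nat.factorial) hc, Multiset.map_map]
      rfl
    rw [this, Finset.prod_multiset_map_count]
    exact Finset.prod_subset hsub fun k hk hk' => by simp [hzero k hk hk']
  have h2 : ∏ k ∈ Finset.univ.image c, (Multiset.count k lam.parts).factorial =
      ∏ k ∈ Finset.Icc 1 n, (Multiset.count k lam.parts).factorial := by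
    rw [himg]
    exact Finset.prod_subset hsub fun k hk hk' => by simp [hzero k hk hk']
  have h3 := card_labelledPart c hsum
  rw [card_labelledPart_eq_mul lam c hc, h1, h2, mul_assoc, ← Finset.prod_mul_distrib] at h3
  rw [h3, Nat.mul_div_cancel]
  exact Finset.prod_pos fun k _ => by positivity

/-! ### The complex of a set partition -/

/-- The complex of a set partition `Ω`: partial transversals of `Ω` with at most two elements.
This is the complete multipartite graph on the blocks, viewed as a complex. -/
def transversalCplx {n : ℕ} (Ω : Finset (Finset (Fin n))) : Set (Finset (Fin n)) :=
  {F | F.card ≤ 2 ∧ ∀ ω ∈ Ω, ∀ a ∈ F, ∀ b ∈ F, a ∈ ω → b ∈ ω → a = b}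

lemma pair_mem_transversalCplx {n : ℕ} {Ω : Finset (Finset (Fin n))} {a b : Fin n} (hab : a ≠ b) :
    {a, b} ∈ transversalCplx Ω ↔ ∀ ω ∈ Ω, a ∈ ω → b ∉ ω := by
  constructor
  · intro h ω hω ha hb
    exact hab (h.2 ω hω a (by simp) b (by simp) ha hb)
  · intro h
    refine ⟨Finset.card_le_two, fun ω hω x hx y hy hxω hyω => ?_⟩
    have := h ω hω
    simp only [Finset.mem_insert, Finset.mem_singleton] at hx hy
    grind

lemma noEdgeIn_iff {n : ℕ} {Δ : Set (Finset (Fin n))} {σ : Finset (Fin n)} :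
    NoEdgeIn n Δ σ ↔ ∀ a ∈ σ, ∀ b ∈ σ, a ≠ b → {a, b} ∉ Δ := by
  constructor
  · intro h a ha b hb hab hE
    exact h _ hE (Finset.card_pair hab) (by simp [Finset.insert_subset_iff, ha, hb])
  · intro h E hE hcard hsub
    obtain ⟨a, b, hab, rfl⟩ := Finset.card_eq_two.1 hcard
    exact h a (hsub (by simp)) b (hsub (by simp)) hab hE

lemma isCplx_transversalCplx {n : ℕ} (Ω : Finset (Finset (Fin n))) :
    IsCplx (transversalCplx Ω) := fun _ hF _ hGF =>
  ⟨(Finset.card_le_card hGF).trans hF.1, fun ω hω a ha b hb =>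
    hF.2 ω hω a (hGF ha) b (hGF hb)⟩

/-- The exchange axiom: at most one element of `G` lies in the block met by `F`. -/
lemma transversalCplx_augment {n : ℕ} {lam : n.Partition} {Ω : Finset (Finset (Fin n))}
    (h : Subord n lam Ω) {F G : Finset (Fin n)} (hG : G ∈ transversalCplx Ω)
    (hlt : F.card < G.card) :
    ∃ x ∈ G, x ∉ F ∧ insert x F ∈ transversalCplx Ω := by
  have hG2 := hG.1
  obtain hF | hF : F.card = 0 ∨ F.card = 1 := by omega
  · rw [Finset.card_eq_zero] at hF
    subst hF
    obtain ⟨x, hx⟩ := Finset.card_pos.1 (show 0 < G.card by simpa using hlt)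
    exact ⟨x, hx, by simp,
      isCplx_transversalCplx Ω G hG _ (by simpa using hx)⟩
  · obtain ⟨a, rfl⟩ := Finset.card_eq_one.1 hF
    obtain ⟨x, y, hxy, rfl⟩ := Finset.card_eq_two.1 (show G.card = 2 by omega)
    obtain ⟨ω, hω, ha⟩ := h.cover a
    rw [pair_mem_transversalCplx hxy] at hG
    have key : ∀ z, z ∉ ω → z ∉ ({a} : Finset (Fin n)) ∧
        insert z {a} ∈ transversalCplx Ω := fun z hz => by
      have hza : z ≠ a := fun hza => hz (hza ▸ ha)
      refine ⟨by simpa using hza, (pair_mem_transversalCplx hza).2 fun ω' hω' hz' ha' => ?_⟩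
      exact hz (h.eq_of_mem hω hω' ha ha' ▸ hz')
    by_cases hx : x ∈ ω
    · exact ⟨y, by simp, key y (hG ω hω hx)⟩
    · exact ⟨x, by simp, key x hx⟩

lemma matroidOn_transversalCplx {n : ℕ} {lam : n.Partition} {Ω : Finset (Finset (Fin n))}
    (h : Subord n lam Ω) : MatroidOn n (transversalCplx Ω) := by
  refine ⟨isCplx_transversalCplx Ω, fun v => ⟨by simp, by simp⟩, fun F hF => hF.1, fun W => ?_⟩
  have key : ∀ F ∈ cplxRes (transversalCplx Ω) W, ∀ G ∈ cplxRes (transversalCplx Ω) W,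
      (∀ H ∈ cplxRes (transversalCplx Ω) W, F ⊆ H → H = F) → G.card ≤ F.card := by
    intro F hF G hG hmax
    by_contra hlt
    obtain ⟨x, hxG, hxF, hx⟩ := transversalCplx_augment h hG.1 (not_le.1 hlt)
    have := hmax (insert x F) ⟨hx, Finset.insert_subset (hG.2 hxG) hF.2⟩ (Finset.subset_insert x F)
    exact hxF (this ▸ Finset.mem_insert_self x F)
  exact fun F hF G hG hFm hGm => le_antisymm (key G hG F hF hGm) (key F hF G hG hFm)

/-- The blocks are recovered from the complex as the maximal edge-free sets. -/
lemma mem_iff_maxAnticlique {n : ℕ} (hn : 1 ≤ n) {lam : n.Partition}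
    {Ω : Finset (Finset (Fin n))} (h : Subord n lam Ω) (σ : Finset (Fin n)) :
    σ ∈ Ω ↔ MaxAnticlique n (transversalCplx Ω) σ := by
  have hblock : ∀ ω ∈ Ω, NoEdgeIn n (transversalCplx Ω) ω := fun ω hω =>
    noEdgeIn_iff.2 fun a ha b hb hab hE => (pair_mem_transversalCplx hab).1 hE ω hω ha hb
  have hsub : ∀ τ, NoEdgeIn n (transversalCplx Ω) τ → ∀ x ∈ τ, ∀ ω ∈ Ω, x ∈ ω → τ ⊆ ω := by
    intro τ hτ x hx ω hω hxω y hy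
    by_cases hxy : x = y
    · exact hxy ▸ hxω
    · have := noEdgeIn_iff.1 hτ x hx y hy hxy
      rw [pair_mem_transversalCplx hxy] at this
      push Not at this
      obtain ⟨ω', hω', hx', hy'⟩ := this
      exact h.eq_of_mem hω hω' hxω hx' ▸ hy'
  constructor
  · intro hσ
    refine ⟨hblock σ hσ, fun σ' hσσ' hσ' => ?_⟩
    obtain ⟨x, hx⟩ := h.pos hσ
    exact (hsub σ' hσ' x (hσσ' hx) σ hσ hx).antisymm hσσ'
  · rintro ⟨hσ, hmax⟩
    have hne : σ.Nonempty := by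
      rw [Finset.nonempty_iff_ne_empty]
      rintro rfl
      have := hmax {⟨0, hn⟩} (by simp) (noEdgeIn_iff.2 fun a ha b hb hab => by
        simp only [Finset.mem_singleton] at ha hb
        exact absurd (ha.trans hb.symm) hab)
      simp at this
    obtain ⟨x, hx⟩ := hne
    obtain ⟨ω, hω, hxω⟩ := h.cover x
    exact hmax ω (hsub σ hσ x hx ω hω hxω) (hblock ω hω) ▸ hω

/-- A non-edge extends to a maximal edge-free set, so a complex of dimension at most one with all
vertices present is determined by its maximal edge-free sets. -/
lemma eq_transversalCplx {n : ℕ} (hn : 1 ≤ n) {Δ : Set (Finset (Fin n))} (hΔ : MatroidOn n Δ)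
    {Ω : Finset (Finset (Fin n))} (hΩ : ∀ σ, σ ∈ Ω ↔ MaxAnticlique n Δ σ) :
    transversalCplx Ω = Δ := by
  obtain ⟨hcplx, hvert, hdim, -⟩ := hΔ
  have hpair : ∀ a b : Fin n, a ≠ b → ({a, b} ∈ transversalCplx Ω ↔ {a, b} ∈ Δ) := by
    intro a b hab
    rw [pair_mem_transversalCplx hab]
    constructor
    · intro hno
      by_contra hE
      have hs : NoEdgeIn n Δ {a, b} := by
        intro E hE' hcard hsub
        rw [Finset.eq_of_subset_of_card_le hsub (by rw [hcard]; exact Finset.card_le_two)] at hE'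
        exact hE hE'
      obtain ⟨σ, hle, hσ⟩ := (Set.toFinite {σ | NoEdgeIn n Δ σ}).exists_le_maximal hs
      have hmem : σ ∈ Ω := (hΩ σ).2
        ⟨hσ.1, fun σ' h1 h2 => (hσ.2 h2 h1).antisymm h1⟩
      exact hno σ hmem (hle (by simp)) (hle (by simp))
    · intro hE ω hω ha hb
      exact noEdgeIn_iff.1 ((hΩ ω).1 hω).1 a ha b hb hab hE
  have hsmall : ∀ F : Finset (Fin n), F.card ≤ 1 → F ∈ transversalCplx Ω ∧ F ∈ Δ := by
    intro F hF
    refine ⟨⟨by omega, fun _ _ a ha b hb _ _ => Finset.card_le_one.1 hF a ha b hb⟩, ?_⟩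
    have : Nonempty (Fin n) := ⟨⟨0, hn⟩⟩
    obtain ⟨v, hv⟩ := Finset.card_le_one_iff_subset_singleton.1 hF
    exact hcplx _ (hvert v) _ hv
  ext F
  by_cases h1 : F.card ≤ 1
  · exact iff_of_true (hsmall F h1).1 (hsmall F h1).2
  · by_cases h2 : F.card = 2
    · obtain ⟨a, b, hab, rfl⟩ := Finset.card_eq_two.1 h2
      exact hpair a b hab
    · exact iff_of_false (fun h => by have := h.1; omega) (fun h => by have := hdim F h; omega)

/-- The matroid complexes on `[n]` with associated partition `lam` are in bijection
with the set partitions of `[n]` subordinate to `lam`; in particular their number is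
the Faà di Bruno coefficient `n! / (a_1! ⋯ a_k! · (1!)^{a_1} ⋯ (k!)^{a_k})`, where
`a_i` is the number of parts of `lam` equal to `i`. -/
theorem matroid_with_partition_count (n : ℕ) (hn : 1 ≤ n) (lam : n.Partition) :
    Nonempty ({Ω : Finset (Finset (Fin n)) // Subord n lam Ω} ≃
      {Δ : Set (Finset (Fin n)) // MatroidOn n Δ ∧
        ∃ Ω : Finset (Finset (Fin n)), Subord n lam Ω ∧
          ∀ σ : Finset (Fin n), σ ∈ Ω ↔ MaxAnticlique n Δ σ}) ∧
    Nat.card {Δ : Set (Finset (Fin n)) // MatroidOn n Δ ∧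
        ∃ Ω : Finset (Finset (Fin n)), Subord n lam Ω ∧
          ∀ σ : Finset (Fin n), σ ∈ Ω ↔ MaxAnticlique n Δ σ} =
      n.factorial / ∏ i ∈ Finset.Icc 1 n,
        (Nat.factorial (Multiset.count i lam.parts) *
          (Nat.factorial i) ^ (Multiset.count i lam.parts)) := by
  let e : {Ω : Finset (Finset (Fin n)) // Subord n lam Ω} ≃
      {Δ : Set (Finset (Fin n)) // MatroidOn n Δ ∧
        ∃ Ω : Finset (Finset (Fin n)), Subord n lam Ω ∧
          ∀ σ : Finset (Fin n), σ ∈ Ω ↔ MaxAnticlique n Δ σ} :=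
    Equiv.ofBijective
      (fun Ω => ⟨transversalCplx Ω.1, matroidOn_transversalCplx Ω.2, Ω.1, Ω.2,
        mem_iff_maxAnticlique hn Ω.2⟩) (by
      constructor
      · intro Ω Ω' hΩ
        have hΩ' : transversalCplx Ω.1 = transversalCplx Ω'.1 := congrArg Subtype.val hΩ
        apply Subtype.ext
        ext1 σ
        rw [mem_iff_maxAnticlique hn Ω.2, mem_iff_maxAnticlique hn Ω'.2, hΩ']
      · rintro ⟨Δ, hΔ, Ω, hΩ, hmax⟩
        exact ⟨⟨Ω, hΩ⟩, Subtype.ext (eq_transversalCplx hn hΔ hmax)⟩)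
  exact ⟨⟨e⟩, by rw [← Nat.card_congr e, card_subord]⟩
end

section
/- If (1, h_1, h_2) is the h-vector of a matroid complex of dimension 1, then it is a pure O-sequence: there exist a number of variables r ≥ 0 and a finite nonempty set M of monomials in x_1, …, x_r, all of the same degree, such that for each i ∈ {0, 1, 2} the number of monomials of degree i dividing at least one element of M equals h_i (where h_0 = 1). -/
/-! The edges of a 1-dimensional matroid complex form a graph on `V` in which every vertex off an
edge is adjacent to one of its ends (`exists_adj`); equivalently, a complete multipartite graph.
Write `n = h₁ + 2` for the number of vertices and `m = h₂ + h₁ + 1` for the number of edges.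

Clearly `m ≤ n.choose 2`, that is `h₂ ≤ (h₁ + 1).choose 2`. If moreover `h₂ > 0`, that is `m ≥ n`,
then `h₁ ≤ 2 h₂`: this is immediate for `n ≤ 3`, and for `n ≥ 4` the graph has two disjoint edges
(`exists_disjoint_edges`), to each of which every other vertex is joined, so that `m ≥ 2 n - 4`
(`two_mul_card_le_of_disjoint_edges`).

Conversely, if `0 < h₂` and `h₁ ≤ 2 h₂ ≤ 2 (h₁ + 1).choose 2`, then `⌈h₁ / 2⌉` quadratic monomials
that together use all `h₁` variables can be enlarged to a set of exactly `h₂` quadratic monomials,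
which is the required `M` (`exists_quadratic_monomials`). If `h₂ = 0`, the variables themselves
do (or the monomial `1`, if there are no variables). -/

variable {α : Type*} [DecidableEq α]

/-! ### The edge count of a rank-2 matroid -/

/-- The exchange property: otherwise `{w}` and `{u, v}` would both be maximal in the restriction
to `{u, v, w}`. -/
lemma exists_adj {Δ : Set (Finset ℕ)} {V : Finset ℕ} (hm : IsMatroidCplx Δ V)
    (hV : ∀ v ∈ V, ({v} : Finset ℕ) ∈ Δ) (h2 : ∀ F ∈ Δ, F.card ≤ 2)
    {u v w : ℕ} (huv : u ≠ v) (he : ({u, v} : Finset ℕ) ∈ Δ) (hw : w ∈ V) :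
    ({w, u} : Finset ℕ) ∈ Δ ∨ ({w, v} : Finset ℕ) ∈ Δ := by
  obtain ⟨hc, hsub, hp⟩ := hm
  by_contra hcon
  push Not at hcon
  obtain ⟨h1, h3⟩ := hcon
  have huvV := hsub _ he
  have hW : ({u, v, w} : Finset ℕ) ⊆ V := by
    intro a ha
    simp only [Finset.mem_insert, Finset.mem_singleton] at ha
    rcases ha with rfl | rfl | rfl
    · exact huvV (by simp)
    · exact huvV (by simp)
    · exact hw
  have := hp _ hW {w} ⟨hV w hw, by simp⟩ {u, v} ⟨he, by intro a; simp; tauto⟩ ?_ ?_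
  · rw [Finset.card_pair huv] at this
    simp at this
  · rintro H ⟨hH, hHW⟩ hwH
    refine Finset.Subset.antisymm ?_ hwH
    intro a ha
    have haW := hHW ha
    have hwH' : w ∈ H := hwH (by simp)
    simp only [Finset.mem_insert, Finset.mem_singleton] at haW ⊢
    rcases haW with rfl | rfl | rfl
    · exact absurd (hc H hH _ (by simp [Finset.insert_subset_iff, ha, hwH'])) h1
    · exact absurd (hc H hH _ (by simp [Finset.insert_subset_iff, ha, hwH'])) h3
    · rfl
  · rintro H ⟨hH, -⟩ hs
    refine (Finset.eq_of_subset_of_card_le hs ?_).symm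
    rw [Finset.card_pair huv]
    exact h2 H hH

/-- Besides the two disjoint edges, count one edge from each vertex off `{u, v}` to `{u, v}`
and one edge from each vertex off all four ends to `{x, y}`. -/
lemma two_mul_card_le_of_disjoint_edges {V : Finset ℕ} {E : Finset (Finset ℕ)}
    (hadj : ∀ u v w, ({u, v} : Finset ℕ) ∈ E → w ∈ V → w ≠ u → w ≠ v →
      ({w, u} : Finset ℕ) ∈ E ∨ ({w, v} : Finset ℕ) ∈ E)
    {u v x y : ℕ} (huv : ({u, v} : Finset ℕ) ∈ E) (hxy : ({x, y} : Finset ℕ) ∈ E)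
    (hux : u ≠ x) (huy : u ≠ y) (hvx : v ≠ x) (hvy : v ≠ y) :
    2 * V.card ≤ E.card + 4 := by
  have key : ∀ a b, ({a, b} : Finset ℕ) ∈ E → ∃ g : ℕ → ℕ, ∀ w ∈ V, w ≠ a → w ≠ b →
      ({w, g w} : Finset ℕ) ∈ E ∧ (g w = a ∨ g w = b) := by
    intro a b hab
    have : ∀ w, ∃ z, w ∈ V → w ≠ a → w ≠ b → ({w, z} : Finset ℕ) ∈ E ∧ (z = a ∨ z = b) := by
      intro w
      by_cases h : w ∈ V ∧ w ≠ a ∧ w ≠ b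
      · rcases hadj a b w hab h.1 h.2.1 h.2.2 with h' | h'
        · exact ⟨a, fun _ _ _ => ⟨h', Or.inl rfl⟩⟩
        · exact ⟨b, fun _ _ _ => ⟨h', Or.inr rfl⟩⟩
      · exact ⟨0, fun h1 h2 h3 => absurd ⟨h1, h2, h3⟩ h⟩
    choose g hg using this
    exact ⟨g, hg⟩
  obtain ⟨g, hg⟩ := key u v huv
  obtain ⟨k, hk⟩ := key x y hxy
  have pair : ∀ a b c d : ℕ, ({a, b} : Finset ℕ) = {c, d} →
      (a = c ∨ a = d) ∧ (c = a ∨ c = b) := by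
    intro a b c d h
    have h1 : a ∈ ({c, d} : Finset ℕ) := h ▸ (by simp)
    have h2 : c ∈ ({a, b} : Finset ℕ) := h ▸ (by simp)
    simpa using And.intro h1 h2
  set A := V \ {u, v} with hA
  set B := V \ {u, v, x, y} with hB
  have cA : V.card ≤ A.card + 2 := by
    have h1 := Finset.le_card_sdiff {u, v} V
    have h2 : ({u, v} : Finset ℕ).card ≤ 2 := Finset.card_le_two
    rw [← hA] at h1
    omega
  have cB : V.card ≤ B.card + 4 := by
    have h1 := Finset.le_card_sdiff {u, v, x, y} V
    have h2 : ({u, v, x, y} : Finset ℕ).card ≤ 4 := Finset.card_le_four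
    rw [← hB] at h1
    omega
  have mA : ∀ w ∈ A, w ∈ V ∧ w ≠ u ∧ w ≠ v := by
    intro w hw; simpa [hA] using hw
  have mB : ∀ w ∈ B, w ∈ V ∧ w ≠ u ∧ w ≠ v ∧ w ≠ x ∧ w ≠ y := by
    intro w hw; simpa [hB] using hw
  have i1 : (A.image fun w => ({w, g w} : Finset ℕ)).card = A.card := by
    apply Finset.card_image_of_injOn
    intro a ha b hb hab
    have h1 := mA a ha
    have h2 := mA b hb
    have h3 := (hg b h2.1 h2.2.1 h2.2.2).2
    have h4 := (pair _ _ _ _ hab).1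
    grind
  have i2 : (B.image fun w => ({w, k w} : Finset ℕ)).card = B.card := by
    apply Finset.card_image_of_injOn
    intro a ha b hb hab
    have h1 := mB a ha
    have h2 := mB b hb
    have h3 := (hk b h2.1 h2.2.2.2.1 h2.2.2.2.2).2
    have h4 := (pair _ _ _ _ hab).1
    grind
  have i3 : ({{u, v}, {x, y}} : Finset (Finset ℕ)).card = 2 := by
    apply Finset.card_pair
    intro h
    have := (pair _ _ _ _ h).1
    grind
  have d1 : Disjoint (A.image fun w => ({w, g w} : Finset ℕ))
      (B.image fun w => ({w, k w} : Finset ℕ)) := by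
    rw [Finset.disjoint_left]
    intro e he he'
    obtain ⟨a, ha, rfl⟩ := Finset.mem_image.1 he
    obtain ⟨b, hb, hab⟩ := Finset.mem_image.1 he'
    have h1 := mA a ha
    have h2 := mB b hb
    have h3 := (hk b h2.1 h2.2.2.2.1 h2.2.2.2.2).2
    have h5 := (hg a h1.1 h1.2.1 h1.2.2).2
    rw [Finset.pair_comm a] at hab
    have h4 := (pair _ _ _ _ hab).2
    grind
  have d2 : Disjoint ((A.image fun w => ({w, g w} : Finset ℕ)) ∪
      (B.image fun w => ({w, k w} : Finset ℕ))) {{u, v}, {x, y}} := by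
    rw [Finset.disjoint_right]
    intro e he he'
    rw [Finset.mem_insert, Finset.mem_singleton] at he
    rw [Finset.mem_union, Finset.mem_image, Finset.mem_image] at he'
    rcases he' with ⟨a, ha, rfl⟩ | ⟨b, hb, rfl⟩
    · have h1 := mA a ha
      have h5 := (hg a h1.1 h1.2.1 h1.2.2).2
      rcases he with h | h
      · have := (pair _ _ _ _ h).1
        grind
      · rw [Finset.pair_comm] at h
        have := (pair _ _ _ _ h).1
        grind
    · have h2 := mB b hb
      rcases he with h | h
      · have := (pair _ _ _ _ h).1
        grind
      · have := (pair _ _ _ _ h).1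
        grind
  have hsub : ((A.image fun w => ({w, g w} : Finset ℕ)) ∪
      (B.image fun w => ({w, k w} : Finset ℕ))) ∪ {{u, v}, {x, y}} ⊆ E := by
    intro e he
    simp only [Finset.mem_union, Finset.mem_image, Finset.mem_insert, Finset.mem_singleton] at he
    rcases he with (⟨a, ha, rfl⟩ | ⟨b, hb, rfl⟩) | rfl | rfl
    · have h1 := mA a ha
      exact (hg a h1.1 h1.2.1 h1.2.2).1
    · have h2 := mB b hb
      exact (hk b h2.1 h2.2.2.2.1 h2.2.2.2.2).1
    · exact huv
    · exact hxy
  have := Finset.card_le_card hsub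
  rw [Finset.card_union_of_disjoint d2, Finset.card_union_of_disjoint d1, i1, i2, i3] at this
  omega

/-- If all edges meet `{u, v}` and no vertex is joined to both `u` and `v`, then an edge other
than `{u, v}` is determined by its vertex off `{u, v}`, so there are at most `n - 1` edges. If
`u v w` is a triangle, an edge from a fourth vertex to it misses one of its edges. -/
lemma exists_disjoint_edges {V : Finset ℕ} {E : Finset (Finset ℕ)}
    (hE : ∀ e ∈ E, e ⊆ V ∧ e.card = 2)
    (hadj : ∀ u v w, ({u, v} : Finset ℕ) ∈ E → w ∈ V → w ≠ u → w ≠ v →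
      ({w, u} : Finset ℕ) ∈ E ∨ ({w, v} : Finset ℕ) ∈ E)
    (hne : E.Nonempty) (hV : 4 ≤ V.card) (hcard : V.card ≤ E.card) :
    ∃ u v x y : ℕ, ({u, v} : Finset ℕ) ∈ E ∧ ({x, y} : Finset ℕ) ∈ E ∧
      u ≠ x ∧ u ≠ y ∧ v ≠ x ∧ v ≠ y := by
  obtain ⟨e, he⟩ := hne
  obtain ⟨u, v, huv, rfl⟩ := Finset.card_eq_two.1 (hE e he).2
  by_contra hcon
  push Not at hcon
  by_cases htri : ∃ w, ({u, w} : Finset ℕ) ∈ E ∧ ({v, w} : Finset ℕ) ∈ E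
  · obtain ⟨w, hu, hv⟩ := htri
    have h3 : ({u, v, w} : Finset ℕ).card ≤ 3 := Finset.card_le_three
    obtain ⟨z, hz, hz'⟩ := Finset.exists_mem_notMem_of_card_lt_card
      (show ({u, v, w} : Finset ℕ).card < V.card by omega)
    simp only [Finset.mem_insert, Finset.mem_singleton, not_or] at hz'
    have huw : u ≠ w := by
      rintro rfl
      simpa using (hE _ hu).2
    have hvw : v ≠ w := by
      rintro rfl
      simpa using (hE _ hv).2
    rcases hadj u v z he hz hz'.1 hz'.2.1 with h | h
    · have := hcon z u v w h hv
      grind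
    · have := hcon z v u w h hu
      grind
  · push Not at htri
    have hmeet : ∀ f ∈ E, f ≠ {u, v} → ∃ w ∈ V \ {u, v},
        f = {u, w} ∨ f = {v, w} := by
      intro f hf hfe
      obtain ⟨x, y, hxy, rfl⟩ := Finset.card_eq_two.1 (hE f hf).2
      have hx : x ∈ V := (hE _ hf).1 (by simp)
      have hy : y ∈ V := (hE _ hf).1 (by simp)
      have h1 := hcon u v x y he hf
      have h2 := Finset.pair_comm x y
      by_cases hxu : x = u
      · subst hxu
        exact ⟨y, by simp; grind, Or.inl rfl⟩
      by_cases hxv : x = v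
      · subst hxv
        exact ⟨y, by simp; grind, Or.inr rfl⟩
      refine ⟨x, by simp; grind, ?_⟩
      grind
    have hsub : E.erase {u, v} ⊆ (V \ {u, v}).image
        fun w => if ({u, w} : Finset ℕ) ∈ E then ({u, w} : Finset ℕ) else {v, w} := by
      intro f hf
      rw [Finset.mem_erase] at hf
      obtain ⟨w, hw, h⟩ := hmeet f hf.2 hf.1
      refine Finset.mem_image.2 ⟨w, hw, ?_⟩
      have := htri w
      rcases h with rfl | rfl
      · simp [hf.2]
      · rw [if_neg (fun h => this h hf.2)]
    have h1 := (Finset.card_le_card hsub).trans Finset.card_image_le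
    have h2 : ({u, v} : Finset ℕ) ⊆ V := (hE _ he).1
    rw [Finset.card_erase_of_mem he, Finset.card_sdiff_of_subset h2, Finset.card_pair huv] at h1
    omega

/-! ### Sets of monomials -/

lemma ncard_degree_zero {r : ℕ} {M : Finset (Fin r → ℕ)} (hM : M.Nonempty) :
    {ν : Fin r → ℕ | (∑ j, ν j) = 0 ∧ ∃ μ ∈ M, ∀ j, ν j ≤ μ j}.ncard = 1 := by
  rw [Set.ncard_eq_one]
  refine ⟨0, ?_⟩
  ext ν
  simp only [Set.mem_ofPred_eq, Set.mem_singleton_iff]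
  constructor
  · rintro ⟨h, -⟩
    ext j
    simpa using (Finset.sum_eq_zero_iff.1 h) j (Finset.mem_univ j)
  · rintro rfl
    obtain ⟨μ, hμ⟩ := hM
    exact ⟨by simp, μ, hμ, by simp⟩

lemma eq_single_of_sum_eq_one {r : ℕ} {ν : Fin r → ℕ} (h : ∑ j, ν j = 1) :
    ∃ i, ν = Pi.single i 1 := by
  obtain ⟨i, hi⟩ : ∃ i, ν i ≠ 0 := by
    by_contra hcon
    push Not at hcon
    simp [hcon] at h
  refine ⟨i, ?_⟩
  have h1 := Finset.add_sum_erase Finset.univ ν (Finset.mem_univ i)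
  have h2 : ∑ j ∈ Finset.univ.erase i, ν j = 0 := by omega
  rw [Finset.sum_eq_zero_iff] at h2
  ext j
  by_cases hj : j = i
  · subst hj
    simp
    omega
  · simpa [hj] using h2 j (by simp [hj])

lemma ncard_degree_one {r : ℕ} {M : Finset (Fin r → ℕ)} (hM : ∀ i, ∃ μ ∈ M, 1 ≤ μ i) :
    {ν : Fin r → ℕ | (∑ j, ν j) = 1 ∧ ∃ μ ∈ M, ∀ j, ν j ≤ μ j}.ncard = r := by
  have : {ν : Fin r → ℕ | (∑ j, ν j) = 1 ∧ ∃ μ ∈ M, ∀ j, ν j ≤ μ j} =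
      Set.range fun i : Fin r => (Pi.single i 1 : Fin r → ℕ) := by
    ext ν
    constructor
    · rintro ⟨h, -⟩
      obtain ⟨i, rfl⟩ := eq_single_of_sum_eq_one h
      exact ⟨i, rfl⟩
    · rintro ⟨i, rfl⟩
      obtain ⟨μ, hμ, h⟩ := hM i
      refine ⟨by simp, μ, hμ, fun j => ?_⟩
      by_cases hj : j = i
      · subst hj
        simpa using h
      · simp [hj]
  rw [this, Set.ncard_range_of_injective, Nat.card_eq_fintype_card, Fintype.card_fin]
  intro i j h
  have := congrFun h i
  by_contra hij
  simp [hij] at this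

lemma ncard_degree_top {r d : ℕ} {M : Finset (Fin r → ℕ)} (hM : ∀ μ ∈ M, ∑ j, μ j = d) :
    {ν : Fin r → ℕ | (∑ j, ν j) = d ∧ ∃ μ ∈ M, ∀ j, ν j ≤ μ j}.ncard = M.card := by
  rw [← Set.ncard_coe_finset]
  congr 1
  ext ν
  constructor
  · rintro ⟨h, μ, hμ, hle⟩
    have h1 : ∑ j, ν j = ∑ j, μ j := by rw [h, hM μ hμ]
    have h2 := (Finset.sum_eq_sum_iff_of_le fun j _ => hle j).1 h1
    have : ν = μ := funext fun j => h2 j (Finset.mem_univ j)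
    rw [this]
    exact hμ
  · intro h
    exact ⟨hM ν h, ν, h, fun _ => le_rfl⟩

lemma ncard_degree_gt {r d k : ℕ} {M : Finset (Fin r → ℕ)} (hM : ∀ μ ∈ M, ∑ j, μ j = d)
    (hk : d < k) :
    {ν : Fin r → ℕ | (∑ j, ν j) = k ∧ ∃ μ ∈ M, ∀ j, ν j ≤ μ j}.ncard = 0 := by
  convert Set.ncard_empty (Fin r → ℕ)
  rw [Set.eq_empty_iff_forall_notMem]
  rintro ν ⟨h, μ, hμ, hle⟩
  have h1 := hM μ hμ
  have h2 : ∑ j, ν j ≤ ∑ j, μ j := Finset.sum_le_sum fun j _ => hle j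
  omega

lemma exists_quadratic_monomials {r k : ℕ} (h1 : r ≤ 2 * k) (h2 : k ≤ (r + 1).choose 2) :
    ∃ M : Finset (Fin r → ℕ), M.card = k ∧ (∀ μ ∈ M, ∑ j, μ j = 2) ∧
      ∀ i, ∃ μ ∈ M, 1 ≤ μ i := by
  -- The products `x_i x_{r-1-i}` use every variable; each arises from an `i` in the lower half.
  set f : Fin r → (Fin r → ℕ) := fun i => Pi.single i 1 + Pi.single i.rev 1 with hf
  set S : Finset (Fin r) := Finset.univ.filter fun i => 2 * i.val < r with hS
  have hScard : S.card ≤ k := by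
    have : (S.image Fin.val) ⊆ Finset.range k := by
      intro a ha
      simp only [hS, Finset.mem_image, Finset.mem_filter] at ha
      obtain ⟨i, ⟨-, hi⟩, rfl⟩ := ha
      rw [Finset.mem_range]
      omega
    have h := Finset.card_le_card this
    rwa [Finset.card_image_of_injective _ Fin.val_injective, Finset.card_range] at h
  have hST : S.image f ⊆ Finset.piAntidiag Finset.univ 2 := by
    intro μ hμ
    obtain ⟨i, -, rfl⟩ := Finset.mem_image.1 hμ
    simp [hf, Finset.sum_add_distrib]
  have hT : (Finset.piAntidiag (Finset.univ : Finset (Fin r)) 2).card = (r + 1).choose 2 := by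
    rw [← Finset.map_sym_eq_piAntidiag, Finset.card_map, Finset.sym_univ, Finset.card_univ,
      Sym.card_sym_eq_multichoose, Nat.multichoose_eq, Fintype.card_fin]
    rfl
  obtain ⟨M, hSM, hMT, hMk⟩ := Finset.exists_subsuperset_card_eq hST
    (Finset.card_image_le.trans hScard) (hT ▸ h2)
  refine ⟨M, hMk, fun μ hμ => ?_, fun i => ?_⟩
  · have := hMT hμ
    simpa using this
  · by_cases hi : 2 * i.val < r
    · exact ⟨f i, hSM (Finset.mem_image_of_mem _ (by simp [hS, hi])), by simp [hf]⟩
    · refine ⟨f i.rev, hSM (Finset.mem_image_of_mem _ ?_), by simp [hf]⟩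
      simp only [hS, Finset.mem_filter, Finset.mem_univ, true_and, Fin.val_rev]
      omega

/-- If `(1, h₁, h₂)` is the h-vector of a 1-dimensional matroid complex (one with
`h₁ + 2` vertices and `h₂ + h₁ + 1` edges), then it is a pure O-sequence: there are
`r ≥ 0` variables and a finite nonempty set `M` of monomials in `x_1, …, x_r`
(recorded as exponent vectors), all of the same degree, such that for each
`i ∈ {0, 1, 2}` the number of degree-`i` monomials dividing at least one element of
`M` is `h_i` (with `h₀ = 1`). -/
theorem dim1_matroid_hvec_pure_O_sequence (h1 h2 : ℕ)
    (hmat : ∃ (Δ : Set (Finset ℕ)) (V : Finset ℕ),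
      IsMatroidCplx Δ V ∧ (∀ v ∈ V, ({v} : Finset ℕ) ∈ Δ) ∧
      (∀ F ∈ Δ, F.card ≤ 2) ∧ (∃ F ∈ Δ, F.card = 2) ∧
      V.card = h1 + 2 ∧ {F | F ∈ Δ ∧ F.card = 2}.ncard = h2 + h1 + 1) :
    ∃ (r d : ℕ) (M : Finset (Fin r → ℕ)), M.Nonempty ∧
      (∀ μ ∈ M, ∑ j, μ j = d) ∧
      {ν : Fin r → ℕ | (∑ j, ν j) = 0 ∧ ∃ μ ∈ M, ∀ j, ν j ≤ μ j}.ncard = 1 ∧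
      {ν : Fin r → ℕ | (∑ j, ν j) = 1 ∧ ∃ μ ∈ M, ∀ j, ν j ≤ μ j}.ncard = h1 ∧
      {ν : Fin r → ℕ | (∑ j, ν j) = 2 ∧ ∃ μ ∈ M, ∀ j, ν j ≤ μ j}.ncard = h2 := by
  obtain ⟨Δ, V, hm, hV, hd, ⟨F₀, hF₀, hF₀c⟩, hVc, hEc⟩ := hmat
  obtain ⟨E, hEm⟩ : ∃ E : Finset (Finset ℕ), ∀ e, e ∈ E ↔ e ∈ Δ ∧ e.card = 2 := by
    classical
    refine ⟨(V.powersetCard 2).filter (· ∈ Δ), fun e => ?_⟩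
    simp only [Finset.mem_filter, Finset.mem_powersetCard]
    exact ⟨fun h => ⟨h.2, h.1.2⟩, fun h => ⟨⟨hm.2.1 e h.1, h.2⟩, h.1⟩⟩
  have hE : ∀ e ∈ E, e ⊆ V ∧ e.card = 2 := fun e he =>
    ⟨hm.2.1 e ((hEm e).1 he).1, ((hEm e).1 he).2⟩
  have hEcard : E.card = h2 + h1 + 1 := by
    rw [← hEc, ← Set.ncard_coe_finset]
    congr 1
    ext e
    simpa using hEm e
  have hadj : ∀ u v w, ({u, v} : Finset ℕ) ∈ E → w ∈ V → w ≠ u → w ≠ v →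
      ({w, u} : Finset ℕ) ∈ E ∨ ({w, v} : Finset ℕ) ∈ E := by
    intro u v w huv hw hwu hwv
    obtain ⟨h, hc⟩ := (hEm _).1 huv
    have hne : u ≠ v := by
      rintro rfl
      simp at hc
    rcases exists_adj hm hV hd hne h hw with h' | h'
    · exact Or.inl ((hEm _).2 ⟨h', Finset.card_pair hwu⟩)
    · exact Or.inr ((hEm _).2 ⟨h', Finset.card_pair hwv⟩)
  have hupper : h2 ≤ (h1 + 1).choose 2 := by
    have h : E ⊆ V.powersetCard 2 := fun e he => Finset.mem_powersetCard.2 (hE e he)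
    have h := Finset.card_le_card h
    rw [Finset.card_powersetCard, hEcard, hVc, Nat.choose_succ_succ' (h1 + 1) 1,
      Nat.choose_one_right] at h
    norm_num at h
    omega
  rcases Nat.eq_zero_or_pos h2 with rfl | hpos
  · rcases Nat.eq_zero_or_pos h1 with rfl | hpos1
    · have hM : ∀ μ ∈ ({0} : Finset (Fin 0 → ℕ)), ∑ j, μ j = 0 := by simp
      exact ⟨0, 0, {0}, by simp, hM, ncard_degree_zero (by simp), ncard_degree_gt hM (by simp),
        ncard_degree_gt hM (by simp)⟩
    · set M : Finset (Fin h1 → ℕ) := Finset.univ.image fun i => Pi.single i 1 with hMdef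
      have hM : ∀ μ ∈ M, ∑ j, μ j = 1 := by simp [hMdef]
      have hne : M.Nonempty := ⟨_, Finset.mem_image_of_mem _ (Finset.mem_univ ⟨0, hpos1⟩)⟩
      refine ⟨h1, 1, M, hne, hM, ncard_degree_zero hne, ncard_degree_one fun i => ?_,
        ncard_degree_gt hM (by simp)⟩
      exact ⟨_, Finset.mem_image_of_mem _ (Finset.mem_univ i), by simp⟩
  · have hlower : h1 ≤ 2 * h2 := by
      by_cases h4 : 4 ≤ V.card
      · obtain ⟨u, v, x, y, huv, hxy, a, b, c, d⟩ :=
          exists_disjoint_edges hE hadj ⟨F₀, (hEm _).2 ⟨hF₀, hF₀c⟩⟩ h4 (by omega)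
        have := two_mul_card_le_of_disjoint_edges (V := V) hadj huv hxy a b c d
        omega
      · omega
    obtain ⟨M, hMk, hM, hcov⟩ := exists_quadratic_monomials hlower hupper
    have hne : M.Nonempty := Finset.card_pos.1 (by omega)
    exact ⟨h1, 2, M, hne, hM, ncard_degree_zero hne, ncard_degree_one hcov,
      (ncard_degree_top hM).trans hMk⟩
end
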